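/- (Theorem A) Let φ be a holomorphic self-map of 𝔻. The following are equivalent: (i) the composition operator C_φ : H^∞(𝔻) → H^∞(𝔻) is mean ergodic; (ii) C_φ : H^∞(𝔻) → H^∞(𝔻) is uniformly mean ergodic; (iii) either there exists z₀ ∈ 𝔻 such that the iterates φ^n converge to the constant z₀ uniformly on 𝔻 (i.e. sup_{z∈𝔻}|φ^n(z) − z₀| → 0), or φ is an elliptic automorphism with φ^k = identity for some positive integer k (a periodic elliptic automorphism). -/

import Mathlib

open Metric Set Filter Complex
open scoped Topology Classical

noncomputable section

/-- Membership in the disc algebra `A(𝔻)`: continuous on the closed unit disc and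
holomorphic on the open unit disc. -/
def IsDiscAlg (f : ℂ → ℂ) : Prop :=
  ContinuousOn f (closedBall (0:ℂ) 1) ∧ DifferentiableOn ℂ f (ball (0:ℂ) 1)

/-- Membership in `H^∞(𝔻)`: bounded and holomorphic on the open unit disc. -/
def IsHInf (f : ℂ → ℂ) : Prop :=
  DifferentiableOn ℂ f (ball (0:ℂ) 1) ∧ ∃ M : ℝ, ∀ z ∈ ball (0:ℂ) 1, ‖f z‖ ≤ M

/-- The Cesàro means `(C_φ)_[n] f = (1/n) ∑_{m=1}^n f ∘ φ^m` of the composition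
operator `C_φ f = f ∘ φ`. -/
def cesaro (φ f : ℂ → ℂ) (n : ℕ) (z : ℂ) : ℂ :=
  (n : ℂ)⁻¹ * ∑ m ∈ Finset.Icc 1 n, f (φ^[m] z)

/-- `C_φ` is mean ergodic on `A(𝔻)`: for each `f ∈ A(𝔻)` the Cesàro means converge
in the sup norm on the closed disc. -/
def MeanErgodicDiscAlg (φ : ℂ → ℂ) : Prop :=
  ∀ f : ℂ → ℂ, IsDiscAlg f →
    ∃ g : ℂ → ℂ, TendstoUniformlyOn (cesaro φ f) g atTop (closedBall (0:ℂ) 1)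

/-- `C_φ` is uniformly mean ergodic on `A(𝔻)`: the Cesàro means converge in operator
norm, i.e. uniformly over the unit ball of `A(𝔻)`. -/
def UnifMeanErgodicDiscAlg (φ : ℂ → ℂ) : Prop :=
  ∃ P : (ℂ → ℂ) → ℂ → ℂ, ∀ ε > (0:ℝ), ∃ N : ℕ, ∀ n ≥ N,
    ∀ f : ℂ → ℂ, IsDiscAlg f → (∀ z ∈ closedBall (0:ℂ) 1, ‖f z‖ ≤ 1) →
      ∀ z ∈ closedBall (0:ℂ) 1, ‖cesaro φ f n z - P f z‖ ≤ ε

/-- `C_φ` is mean ergodic on `H^∞(𝔻)`: for each `f ∈ H^∞(𝔻)` the Cesàro means converge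
in the sup norm on the open disc. -/
def MeanErgodicHInf (φ : ℂ → ℂ) : Prop :=
  ∀ f : ℂ → ℂ, IsHInf f →
    ∃ g : ℂ → ℂ, TendstoUniformlyOn (cesaro φ f) g atTop (ball (0:ℂ) 1)

/-- `C_φ` is uniformly mean ergodic on `H^∞(𝔻)`: the Cesàro means converge in operator
norm, i.e. uniformly over the unit ball of `H^∞(𝔻)`. -/
def UnifMeanErgodicHInf (φ : ℂ → ℂ) : Prop :=
  ∃ P : (ℂ → ℂ) → ℂ → ℂ, ∀ ε > (0:ℝ), ∃ N : ℕ, ∀ n ≥ N,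
    ∀ f : ℂ → ℂ, IsHInf f → (∀ z ∈ ball (0:ℂ) 1, ‖f z‖ ≤ 1) →
      ∀ z ∈ ball (0:ℂ) 1, ‖cesaro φ f n z - P f z‖ ≤ ε

/-- `φ` is an automorphism (biholomorphic self-map) of the open unit disc. -/
def IsDiscAutomorphism (φ : ℂ → ℂ) : Prop :=
  DifferentiableOn ℂ φ (ball (0:ℂ) 1) ∧ MapsTo φ (ball (0:ℂ) 1) (ball (0:ℂ) 1) ∧
  ∃ ψ : ℂ → ℂ, DifferentiableOn ℂ ψ (ball (0:ℂ) 1) ∧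
    MapsTo ψ (ball (0:ℂ) 1) (ball (0:ℂ) 1) ∧
    (∀ z ∈ ball (0:ℂ) 1, ψ (φ z) = z) ∧ ∀ z ∈ ball (0:ℂ) 1, φ (ψ z) = z

/-- An elliptic automorphism of the disc: an automorphism with a fixed point in `𝔻`. -/
def IsEllipticAutomorphism (φ : ℂ → ℂ) : Prop :=
  IsDiscAutomorphism φ ∧ ∃ z ∈ ball (0:ℂ) 1, φ z = z

/-- A hyperbolic automorphism of the disc: an automorphism with exactly two fixed
points, both on the unit circle. -/
def IsHyperbolicAutomorphism (φ : ℂ → ℂ) : Prop :=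
  IsDiscAutomorphism φ ∧ ∃ p q : ℂ, p ≠ q ∧ ‖p‖ = 1 ∧ ‖q‖ = 1 ∧ φ p = p ∧ φ q = q ∧
    ∀ z ∈ closedBall (0:ℂ) 1, φ z = z → z = p ∨ z = q

/-- A parabolic automorphism of the disc: an automorphism with exactly one fixed
point, lying on the unit circle. -/
def IsParabolicAutomorphism (φ : ℂ → ℂ) : Prop :=
  IsDiscAutomorphism φ ∧ ∃ p : ℂ, ‖p‖ = 1 ∧ φ p = p ∧
    ∀ z ∈ closedBall (0:ℂ) 1, φ z = z → z = p

/-- A set `J ⊆ ℕ` has density one: `#(J ∩ [0,N]) / N → 1` as `N → ∞`. -/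
def HasDensityOne (J : Set ℕ) : Prop :=
  Tendsto (fun N : ℕ => (((Finset.range (N + 1)).filter (fun n => n ∈ J)).card : ℝ) / N)
    atTop (𝓝 1)

/-- A typical weight on `𝔻`: continuous, strictly positive, bounded, radial,
non-increasing in `|z|`, and tending to `0` as `|z| → 1`. -/
def IsTypicalWeight (v : ℂ → ℝ) : Prop :=
  ContinuousOn v (ball (0:ℂ) 1) ∧ (∀ z ∈ ball (0:ℂ) 1, 0 < v z) ∧
  (∃ M : ℝ, ∀ z ∈ ball (0:ℂ) 1, v z ≤ M) ∧
  (∀ z ∈ ball (0:ℂ) 1, ∀ w ∈ ball (0:ℂ) 1, ‖z‖ = ‖w‖ → v z = v w) ∧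
  (∀ z ∈ ball (0:ℂ) 1, ∀ w ∈ ball (0:ℂ) 1, ‖z‖ ≤ ‖w‖ → v w ≤ v z) ∧
  (∀ ε > (0:ℝ), ∃ r : ℝ, r < 1 ∧ ∀ z ∈ ball (0:ℂ) 1, r ≤ ‖z‖ → v z < ε)

/-- Membership in the weighted space `H_v^∞`. -/
def IsHvInf (v : ℂ → ℝ) (f : ℂ → ℂ) : Prop :=
  DifferentiableOn ℂ f (ball (0:ℂ) 1) ∧ ∃ M : ℝ, ∀ z ∈ ball (0:ℂ) 1, v z * ‖f z‖ ≤ M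

/-- Membership in the weighted space `H_v^0`. -/
def IsHv0 (v : ℂ → ℝ) (f : ℂ → ℂ) : Prop :=
  IsHvInf v f ∧
  ∀ ε > (0:ℝ), ∃ r : ℝ, r < 1 ∧ ∀ z ∈ ball (0:ℂ) 1, r ≤ ‖z‖ → v z * ‖f z‖ < ε

/-!
Since `‖f‖_∞ ≤ 1` controls `f` near `p`, uniform convergence `φ^n → p` makes the terms `f ∘ φ^n`
converge to `f p` uniformly in `f` as well; periodicity makes the Cesàro means converge at rate
`1 / n`. Both give uniform mean ergodicity.

Conversely let `C_φ` be mean ergodic. If the orbit of `0` stays in a smaller disc, `φ` has a fixed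
point, which may be moved to `0`. If some `φ^n` maps `𝔻` into a smaller disc, the Schwarz lemma
gives uniform convergence to `0`. Otherwise orbit segments of every length can be chosen so close to
the circle that one Blaschke product `F` with `F 0 ≠ 0` vanishes on all of them. The limit of its
Cesàro means has the value `F 0` at `0` but is not constant; it is holomorphic and `φ`-invariant, so
comparing leading Taylor coefficients at `0` shows that `φ' 0` is a root of unity, and by the
Schwarz lemma some iterate of `φ` is the identity.

If the orbit of `0` accumulates at a point `ω` of the circle, put
`f_t = exp (i t log (1 + log (2 / (1 - ω̄ z))))`. By the Schwarz–Pick lemma a bounded number of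
steps of the orbit changes `f_t` less and less on approaching `ω`. Mean ergodicity then forces `f_t`
to converge along a sequence of orbit points tending to `ω`, for every `t ∈ [0, 1]`. But the
exponents there tend to `∞`, and integrating quotients of such values over `t` gives both `1` and
`0` in the limit.
-/

open scoped ComplexConjugate

local notation "𝔻" => ball (0 : ℂ) 1

/-! ### Disc involutions and the Schwarz–Pick lemma -/

lemma one_sub_norm_le_norm_one_sub_conj_mul {a : ℂ} (ha : ‖a‖ ≤ 1) (z : ℂ) :
    1 - ‖z‖ ≤ ‖1 - conj a * z‖ := by
  have hle : ‖conj a * z‖ ≤ ‖z‖ := by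
    rw [norm_mul, norm_conj]
    exact mul_le_of_le_one_left (norm_nonneg z) ha
  calc 1 - ‖z‖ ≤ ‖(1 : ℂ)‖ - ‖conj a * z‖ := by rw [norm_one]; gcongr
    _ ≤ ‖1 - conj a * z‖ := norm_sub_norm_le _ _

lemma norm_one_sub_conj_mul_pos {a z : ℂ} (ha : ‖a‖ ≤ 1) (hz : z ∈ 𝔻) :
    0 < ‖1 - conj a * z‖ :=
  (sub_pos.2 (mem_ball_zero_iff.1 hz)).trans_le (one_sub_norm_le_norm_one_sub_conj_mul ha z)

lemma one_sub_conj_mul_ne_zero {a z : ℂ} (ha : ‖a‖ ≤ 1) (hz : z ∈ 𝔻) : 1 - conj a * z ≠ 0 :=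
  norm_pos_iff.1 (norm_one_sub_conj_mul_pos ha hz)

lemma one_sub_norm_sq_pos {z : ℂ} (hz : z ∈ 𝔻) : 0 < 1 - ‖z‖ ^ 2 :=
  sub_pos.2 (pow_lt_one₀ (norm_nonneg z) (mem_ball_zero_iff.1 hz) two_ne_zero)

lemma norm_one_sub_conj_mul_sq_sub (p z : ℂ) :
    ‖1 - conj p * z‖ ^ 2 - ‖p - z‖ ^ 2 = (1 - ‖p‖ ^ 2) * (1 - ‖z‖ ^ 2) := by
  simp only [Complex.sq_norm, normSq_apply, sub_re, sub_im, mul_re, mul_im, conj_re, conj_im,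
    one_re, one_im]
  ring

lemma norm_one_sub_conj_mul_self {z : ℂ} (hz : z ∈ 𝔻) : ‖1 - conj z * z‖ = 1 - ‖z‖ ^ 2 := by
  rw [conj_mul', ← ofReal_pow, ← ofReal_one, ← ofReal_sub, norm_real,
    Real.norm_of_nonneg (one_sub_norm_sq_pos hz).le]

/-- The involutive automorphism of the unit disc exchanging `p` and `0`. Its modulus
`‖discInvolution p z‖` is the pseudohyperbolic distance of `p` and `z`. -/
def discInvolution (p z : ℂ) : ℂ := (p - z) / (1 - conj p * z)

@[simp] lemma discInvolution_self (p : ℂ) : discInvolution p p = 0 := by simp [discInvolution]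

@[simp] lemma discInvolution_zero (p : ℂ) : discInvolution p 0 = p := by simp [discInvolution]

section DiscInvolution

variable {p z w : ℂ}

lemma one_sub_norm_discInvolution_sq (hp : p ∈ 𝔻) (hz : z ∈ 𝔻) :
    1 - ‖discInvolution p z‖ ^ 2 =
      (1 - ‖p‖ ^ 2) * (1 - ‖z‖ ^ 2) / ‖1 - conj p * z‖ ^ 2 := by
  have hpos := norm_one_sub_conj_mul_pos (mem_ball_zero_iff.1 hp).le hz
  rw [discInvolution, norm_div, ← norm_one_sub_conj_mul_sq_sub, div_pow, sub_div,
    div_self (by positivity)]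

lemma mapsTo_discInvolution (hp : p ∈ 𝔻) : MapsTo (discInvolution p) 𝔻 𝔻 := by
  intro z hz
  have hpos := norm_one_sub_conj_mul_pos (mem_ball_zero_iff.1 hp).le hz
  have hp' := one_sub_norm_sq_pos hp
  have hz' := one_sub_norm_sq_pos hz
  have hsq : 0 < 1 - ‖discInvolution p z‖ ^ 2 := by
    rw [one_sub_norm_discInvolution_sq hp hz]; positivity
  exact mem_ball_zero_iff.2 ((sq_lt_one_iff₀ (norm_nonneg _)).1 (sub_pos.1 hsq))

lemma discInvolution_discInvolution (hp : p ∈ 𝔻) (hz : z ∈ 𝔻) :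
    discInvolution p (discInvolution p z) = z := by
  have hp' := (mem_ball_zero_iff.1 hp).le
  have hdz := one_sub_conj_mul_ne_zero hp' hz
  have hdσ := one_sub_conj_mul_ne_zero hp' (mapsTo_discInvolution hp hz)
  have hσ : discInvolution p z * (1 - conj p * z) = p - z := div_mul_cancel₀ _ hdz
  rw [discInvolution, div_eq_iff hdσ]
  apply mul_right_cancel₀ hdz
  linear_combination (-1 + z * conj p) * hσ

lemma differentiableOn_discInvolution (hp : p ∈ 𝔻) : DifferentiableOn ℂ (discInvolution p) 𝔻 := by
  intro z hz
  have := one_sub_conj_mul_ne_zero (mem_ball_zero_iff.1 hp).le hz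
  unfold discInvolution
  fun_prop (disch := assumption)

lemma norm_discInvolution_pos (hp : p ∈ 𝔻) (hz : z ∈ 𝔻) (hne : p ≠ z) :
    0 < ‖discInvolution p z‖ :=
  norm_pos_iff.2 (div_ne_zero (sub_ne_zero.2 hne)
    (one_sub_conj_mul_ne_zero (mem_ball_zero_iff.1 hp).le hz))

lemma norm_one_sub_conj_mul_le (hz : z ∈ 𝔻) :
    ‖1 - conj z * w‖ ≤ 1 - ‖z‖ ^ 2 + ‖z - w‖ := by
  calc ‖1 - conj z * w‖ = ‖(1 - conj z * z) + conj z * (z - w)‖ := by ring_nf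
    _ ≤ 1 - ‖z‖ ^ 2 + ‖z‖ * ‖z - w‖ := by
        grw [norm_add_le, norm_one_sub_conj_mul_self hz, norm_mul, norm_conj]
    _ ≤ 1 - ‖z‖ ^ 2 + ‖z - w‖ := by
        grw [mul_le_of_le_one_left (norm_nonneg _) (mem_ball_zero_iff.1 hz).le]

lemma norm_sub_le_of_norm_discInvolution_le {r : ℝ} (hz : z ∈ 𝔻) (hw : w ∈ 𝔻) (hr : r < 1)
    (h : ‖discInvolution z w‖ ≤ r) : ‖z - w‖ ≤ 2 / (1 - r) * (1 - ‖z‖) := by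
  have hz' := mem_ball_zero_iff.1 hz
  have hr₀ : 0 ≤ r := (norm_nonneg _).trans h
  rw [discInvolution, norm_div, div_le_iff₀ (norm_one_sub_conj_mul_pos hz'.le hw)] at h
  have hle : (1 - r) * ‖z - w‖ ≤ 2 * (1 - ‖z‖) := by
    nlinarith [norm_one_sub_conj_mul_le (w := w) hz, one_sub_norm_sq_pos hz, norm_nonneg z]
  rw [div_mul_eq_mul_div, le_div_iff₀ (by linarith)]
  linarith

end DiscInvolution

theorem schwarz_pick {φ : ℂ → ℂ} (hd : DifferentiableOn ℂ φ 𝔻) (hm : MapsTo φ 𝔻 𝔻) {z w : ℂ}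
    (hz : z ∈ 𝔻) (hw : w ∈ 𝔻) :
    ‖discInvolution (φ z) (φ w)‖ ≤ ‖discInvolution z w‖ := by
  have hσ := mapsTo_discInvolution hz
  have hτ := mapsTo_discInvolution (hm hz)
  have hd' : DifferentiableOn ℂ (discInvolution (φ z) ∘ φ ∘ discInvolution z) 𝔻 :=
    (differentiableOn_discInvolution (hm hz)).comp
      (hd.comp (differentiableOn_discInvolution hz) hσ) (hm.comp hσ)
  simpa [discInvolution_discInvolution hz hw] using
    norm_le_norm_of_mapsTo_ball hd' ((hτ.comp (hm.comp hσ)).mono_right ball_subset_closedBall)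
      (by simp) (mem_ball_zero_iff.1 (hσ hw))

/-! ### Bounded orbits have fixed points -/

/-- `cosh (d / 2)` for the hyperbolic distance `d` between the points `w` and `z` of the unit
disc (curvature `-1`). -/
def coshHalfDist (w z : ℂ) : ℝ :=
  ‖1 - conj w * z‖ / (√(1 - ‖w‖ ^ 2) * √(1 - ‖z‖ ^ 2))

section CoshHalfDist

variable {p q w z : ℂ}

lemma coshHalfDist_eq_one_div_sqrt (hw : w ∈ 𝔻) (hz : z ∈ 𝔻) :
    coshHalfDist w z = 1 / √(1 - ‖discInvolution w z‖ ^ 2) := by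
  have hw' := one_sub_norm_sq_pos hw
  rw [one_sub_norm_discInvolution_sq hw hz, Real.sqrt_div' _ (by positivity),
    Real.sqrt_mul hw'.le, Real.sqrt_sq (norm_nonneg _), one_div_div, coshHalfDist]

lemma sqrt_one_sub_norm_discInvolution_sq_pos (hw : w ∈ 𝔻) (hz : z ∈ 𝔻) :
    0 < √(1 - ‖discInvolution w z‖ ^ 2) :=
  Real.sqrt_pos.2 (one_sub_norm_sq_pos (mapsTo_discInvolution hw hz))

lemma one_le_coshHalfDist (hw : w ∈ 𝔻) (hz : z ∈ 𝔻) : 1 ≤ coshHalfDist w z := by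
  rw [coshHalfDist_eq_one_div_sqrt hw hz,
    le_div_iff₀ (sqrt_one_sub_norm_discInvolution_sq_pos hw hz), one_mul, Real.sqrt_le_one]
  linarith [sq_nonneg ‖discInvolution w z‖]

lemma one_lt_coshHalfDist (hw : w ∈ 𝔻) (hz : z ∈ 𝔻) (hne : w ≠ z) : 1 < coshHalfDist w z := by
  have hpos := norm_discInvolution_pos hw hz hne
  rw [coshHalfDist_eq_one_div_sqrt hw hz,
    lt_div_iff₀ (sqrt_one_sub_norm_discInvolution_sq_pos hw hz), one_mul,
    Real.sqrt_lt' one_pos]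
  linarith [pow_pos hpos 2]

lemma coshHalfDist_map_le {φ : ℂ → ℂ} (hd : DifferentiableOn ℂ φ 𝔻) (hm : MapsTo φ 𝔻 𝔻)
    (hw : w ∈ 𝔻) (hz : z ∈ 𝔻) : coshHalfDist (φ w) (φ z) ≤ coshHalfDist w z := by
  rw [coshHalfDist_eq_one_div_sqrt hw hz, coshHalfDist_eq_one_div_sqrt (hm hw) (hm hz)]
  have hpos := sqrt_one_sub_norm_discInvolution_sq_pos hw hz
  gcongr
  exact schwarz_pick hd hm hw hz

lemma continuousOn_coshHalfDist {X : Type*} [TopologicalSpace X] {s : Set X} {f g : X → ℂ}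
    (hf : ContinuousOn f s) (hg : ContinuousOn g s) (hfs : MapsTo f s 𝔻) (hgs : MapsTo g s 𝔻) :
    ContinuousOn (fun x => coshHalfDist (f x) (g x)) s := by
  unfold coshHalfDist
  refine ContinuousOn.div (by fun_prop) (by fun_prop) fun x hx => ?_
  have hfx := one_sub_norm_sq_pos (hfs hx)
  have hgx := one_sub_norm_sq_pos (hgs hx)
  positivity

@[simp] lemma coshHalfDist_zero_left (z : ℂ) : coshHalfDist 0 z = 1 / √(1 - ‖z‖ ^ 2) := by
  simp [coshHalfDist]

lemma one_sub_div_sq_le_of_coshHalfDist_le {r C : ℝ} (hw : w ∈ 𝔻) (hz : ‖z‖ ≤ r) (hr : r < 1)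
    (h : coshHalfDist w z ≤ C) : ((1 - r) / C) ^ 2 ≤ 1 - ‖w‖ ^ 2 := by
  have hw' := one_sub_norm_sq_pos hw
  have hz₁ : z ∈ 𝔻 := mem_ball_zero_iff.2 (hz.trans_lt hr)
  have hz' := one_sub_norm_sq_pos hz₁
  have hC : 0 < C := one_pos.trans_le ((one_le_coshHalfDist hw hz₁).trans h)
  have hr' : 0 ≤ 1 - r := by linarith
  have hle : 1 - r ≤ C * √(1 - ‖w‖ ^ 2) := by
    calc 1 - r ≤ 1 - ‖z‖ := by gcongr
      _ ≤ ‖1 - conj w * z‖ :=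
          one_sub_norm_le_norm_one_sub_conj_mul (mem_ball_zero_iff.1 hw).le z
      _ = coshHalfDist w z * (√(1 - ‖w‖ ^ 2) * √(1 - ‖z‖ ^ 2)) := by
          rw [coshHalfDist, div_mul_cancel₀ _ (by positivity)]
      _ ≤ C * (√(1 - ‖w‖ ^ 2) * 1) := by
          gcongr
          exact Real.sqrt_le_one.2 (by linarith [sq_nonneg ‖z‖])
      _ = C * √(1 - ‖w‖ ^ 2) := by rw [mul_one]
  rw [← Real.le_sqrt (div_nonneg hr' hC.le) hw'.le]
  rwa [div_le_iff₀' hC]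

lemma exists_lt_one_norm_le_of_coshHalfDist_le {r C : ℝ} (hr : r < 1) (hC : 0 < C) :
    ∃ R < 1, ∀ w ∈ 𝔻, ∀ z, ‖z‖ ≤ r → coshHalfDist w z ≤ C → ‖w‖ ≤ R := by
  refine ⟨√(1 - ((1 - r) / C) ^ 2), ?_, fun w hw z hz h => ?_⟩
  · have : 0 < (1 - r) / C := div_pos (by linarith) hC
    rw [Real.sqrt_lt' one_pos]
    linarith [pow_pos this 2]
  · exact Real.le_sqrt_of_sq_le (by linarith [one_sub_div_sq_le_of_coshHalfDist_le hw hz hr h])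

lemma mem_ball_div_of_norm_lt {x y : ℂ} (h : ‖y‖ < ‖x‖) : y / x ∈ 𝔻 := by
  rw [mem_ball_zero_iff, norm_div]
  exact (div_lt_one ((norm_nonneg y).trans_lt h)).2 h

lemma coshHalfDist_div {x y : ℂ} (h : ‖y‖ < ‖x‖) (z : ℂ) :
    coshHalfDist (y / x) z =
      ‖conj x - conj y * z‖ / (√(‖x‖ ^ 2 - ‖y‖ ^ 2) * √(1 - ‖z‖ ^ 2)) := by
  have hx : 0 < ‖x‖ := (norm_nonneg y).trans_lt h
  have hx' : conj x ≠ 0 := (map_ne_zero _).2 (norm_pos_iff.1 hx)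
  have hnum : ‖1 - conj (y / x) * z‖ = ‖conj x - conj y * z‖ / ‖x‖ := by
    rw [← norm_conj x, ← norm_div, map_div₀]
    congr 1
    field_simp
  have hden : √(1 - ‖y / x‖ ^ 2) = √(‖x‖ ^ 2 - ‖y‖ ^ 2) / ‖x‖ := by
    rw [← Real.sqrt_sq hx.le, ← Real.sqrt_div' _ (by positivity), Real.sqrt_sq hx.le, norm_div]
    congr 1
    field_simp
  rw [coshHalfDist, hnum, hden]
  field_simp

/-- In the hyperboloid model `p` and `q` are lifted to `s • (1, p)` and `(θ * t) • (1, q)`; the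
phase `θ` makes the inner product of the lifts for the form `‖x‖² - ‖y‖²` real. -/
lemma norm_sq_sub_norm_sq_add_phase {s t : ℝ} {θ : ℂ} (hθ : ‖θ‖ = 1)
    (hθ' : θ * (1 - conj p * q) = ‖1 - conj p * q‖) :
    ‖(s : ℂ) + θ * t‖ ^ 2 - ‖s * p + θ * t * q‖ ^ 2 =
      s ^ 2 * (1 - ‖p‖ ^ 2) + t ^ 2 * (1 - ‖q‖ ^ 2) + 2 * s * t * ‖1 - conj p * q‖ := by
  have hre := congrArg re hθ'
  have hsq : ‖θ‖ ^ 2 = 1 := by rw [hθ, one_pow]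
  rw [ofReal_re] at hre
  rw [← hre]
  simp only [Complex.sq_norm, normSq_apply, sub_re, sub_im, mul_re, mul_im, conj_re, conj_im,
    one_re, one_im, add_re, add_im, ofReal_re, ofReal_im] at hsq ⊢
  linear_combination (t ^ 2 * (1 - q.re ^ 2 - q.im ^ 2)) * hsq

/-- The midpoint of `p` and `q` is read off the sum of their lifts to the hyperboloid; the
inequality is the triangle inequality for that sum. -/
lemma exists_midpoint_coshHalfDist_le (hp : p ∈ 𝔻) (hq : q ∈ 𝔻) :
    ∃ m ∈ 𝔻, ∀ z ∈ 𝔻, coshHalfDist m z ≤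
      (coshHalfDist p z + coshHalfDist q z) / √(2 + 2 * coshHalfDist p q) := by
  obtain ⟨θ, hθ, hθ'⟩ := exists_norm_eq_mul_self (1 - conj p * q)
  have hp' := one_sub_norm_sq_pos hp
  have hq' := one_sub_norm_sq_pos hq
  have hE := one_le_coshHalfDist hp hq
  set s := 1 / √(1 - ‖p‖ ^ 2) with hs
  set t := 1 / √(1 - ‖q‖ ^ 2) with ht
  have hs₀ : 0 < s := by positivity
  have ht₀ : 0 < t := by positivity
  set x : ℂ := s + θ * t with hx
  set y : ℂ := s * p + θ * t * q with hy
  have hxy : ‖x‖ ^ 2 - ‖y‖ ^ 2 = 2 + 2 * coshHalfDist p q := by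
    rw [norm_sq_sub_norm_sq_add_phase hθ hθ'.symm, coshHalfDist, hs, ht, div_pow, div_pow,
      Real.sq_sqrt hp'.le, Real.sq_sqrt hq'.le]
    field_simp
    ring
  have hlt : ‖y‖ < ‖x‖ := lt_of_pow_lt_pow_left₀ 2 (norm_nonneg x) (by linarith)
  refine ⟨y / x, mem_ball_div_of_norm_lt hlt, fun z hz => ?_⟩
  have hz' := one_sub_norm_sq_pos hz
  have htri : ‖conj x - conj y * z‖ ≤ s * ‖1 - conj p * z‖ + t * ‖1 - conj q * z‖ := by
    calc ‖conj x - conj y * z‖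
        = ‖s * (1 - conj p * z) + conj θ * t * (1 - conj q * z)‖ := by
          simp only [hx, hy, map_add, map_mul, conj_ofReal]
          ring_nf
      _ ≤ s * ‖1 - conj p * z‖ + t * ‖1 - conj q * z‖ := by
          grw [norm_add_le]
          simp only [norm_mul, norm_conj, hθ, norm_real, Real.norm_of_nonneg hs₀.le,
            Real.norm_of_nonneg ht₀.le, one_mul, le_refl]
  calc coshHalfDist (y / x) z
      ≤ (s * ‖1 - conj p * z‖ + t * ‖1 - conj q * z‖) /
          (√(2 + 2 * coshHalfDist p q) * √(1 - ‖z‖ ^ 2)) := by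
        rw [coshHalfDist_div hlt, hxy]
        gcongr
    _ = (coshHalfDist p z + coshHalfDist q z) / √(2 + 2 * coshHalfDist p q) := by
        rw [coshHalfDist.eq_def p z, coshHalfDist.eq_def q z, hs, ht]
        field_simp

end CoshHalfDist

section FixedPoint

variable {φ : ℂ → ℂ}

lemma exists_one_lt_forall_le_coshHalfDist_map {K : Set ℂ} (hK : IsCompact K) (hK𝔻 : K ⊆ 𝔻)
    (hφ : ContinuousOn φ K) (hm : MapsTo φ K 𝔻) (hne : ∀ w ∈ K, φ w ≠ w) :
    ∃ c > 1, ∀ w ∈ K, c ≤ coshHalfDist w (φ w) := by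
  rcases K.eq_empty_or_nonempty with rfl | hK₀
  · exact ⟨2, one_lt_two, by simp⟩
  obtain ⟨w₀, hw₀, hmin⟩ := hK.exists_isMinOn hK₀
    (continuousOn_coshHalfDist continuousOn_id hφ hK𝔻 hm)
  exact ⟨_, one_lt_coshHalfDist (hK𝔻 hw₀) (hm hw₀) (hne w₀ hw₀).symm, fun w hw => hmin hw⟩

lemma eventually_coshHalfDist_map_iterate_le (hd : DifferentiableOn ℂ φ 𝔻) (hm : MapsTo φ 𝔻 𝔻)
    {w x : ℂ} {C : ℝ} (hw : w ∈ 𝔻) (hx : x ∈ 𝔻)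
    (h : ∀ᶠ n in atTop, coshHalfDist w (φ^[n] x) ≤ C) :
    ∀ᶠ n in atTop, coshHalfDist (φ w) (φ^[n] x) ≤ C := by
  rw [← map_add_atTop_eq_nat 1, eventually_map]
  filter_upwards [h] with n hn
  rw [Function.iterate_succ_apply']
  exact (coshHalfDist_map_le hd hm hw (hm.iterate n hx)).trans hn

lemma exists_eventually_coshHalfDist_iterate_le_mul (hd : DifferentiableOn ℂ φ 𝔻)
    (hm : MapsTo φ 𝔻 𝔻) {w x : ℂ} {c C : ℝ} (hw : w ∈ 𝔻) (hx : x ∈ 𝔻) (hc : 1 < c)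
    (hcw : c ≤ coshHalfDist w (φ w))
    (h : ∀ᶠ n in atTop, coshHalfDist w (φ^[n] x) ≤ C) :
    ∃ m ∈ 𝔻, ∀ᶠ n in atTop, coshHalfDist m (φ^[n] x) ≤ 2 / √(2 + 2 * c) * C := by
  obtain ⟨m, hm𝔻, hmid⟩ := exists_midpoint_coshHalfDist_le hw (hm hw)
  refine ⟨m, hm𝔻, ?_⟩
  filter_upwards [h, eventually_coshHalfDist_map_iterate_le hd hm hw hx h] with n hn hn'
  have hC : 0 < C := one_pos.trans_le ((one_le_coshHalfDist hw (hm.iterate n hx)).trans hn)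
  calc coshHalfDist m (φ^[n] x)
      ≤ (C + C) / √(2 + 2 * c) := by grw [hmid _ (hm.iterate n hx), hn, hn', hcw]
    _ = 2 / √(2 + 2 * c) * C := by ring

lemma exists_eventually_coshHalfDist_iterate_le_pow_mul (hd : DifferentiableOn ℂ φ 𝔻)
    (hm : MapsTo φ 𝔻 𝔻) {x : ℂ} {K : Set ℂ} {c C : ℝ}
    (hx : x ∈ 𝔻) (hc : 1 < c) (hcK : ∀ w ∈ K, c ≤ coshHalfDist w (φ w))
    (hK : ∀ w ∈ 𝔻, (∃ n, coshHalfDist w (φ^[n] x) ≤ C) → w ∈ K)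
    (h₀ : ∃ w ∈ 𝔻, ∀ᶠ n in atTop, coshHalfDist w (φ^[n] x) ≤ C) (j : ℕ) :
    ∃ w ∈ 𝔻, ∀ᶠ n in atTop, coshHalfDist w (φ^[n] x) ≤ (2 / √(2 + 2 * c)) ^ j * C := by
  have hκ : 2 / √(2 + 2 * c) ≤ 1 :=
    (div_le_one (by positivity)).2 (Real.le_sqrt_of_sq_le (by linarith))
  induction j with
  | zero => simpa only [pow_zero, one_mul] using h₀
  | succ j ih =>
    obtain ⟨w, hw, hwC⟩ := ih
    obtain ⟨n, hn⟩ := hwC.exists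
    have hκC : 0 ≤ (2 / √(2 + 2 * c)) ^ j * C :=
      zero_le_one.trans ((one_le_coshHalfDist hw (hm.iterate n hx)).trans hn)
    have hC : 0 ≤ C := nonneg_of_mul_nonneg_right hκC (by positivity)
    have hwK : w ∈ K := hK w hw
      ⟨n, hn.trans (mul_le_of_le_one_left hC (pow_le_one₀ (by positivity) hκ))⟩
    rw [pow_succ', mul_assoc]
    exact exists_eventually_coshHalfDist_iterate_le_mul hd hm hw hx hc (hcK w hwK) hwC

/-- Without a fixed point, replacing a centre `w` by the midpoint of `w` and `φ w` would shrink the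
eventual radius of the orbit around its centre by a factor bounded away from `1`; iterating, the
`coshHalfDist` of the radius would fall below its least value `1`. -/
theorem exists_fixedPoint_of_norm_iterate_le (hd : DifferentiableOn ℂ φ 𝔻) (hm : MapsTo φ 𝔻 𝔻)
    {r : ℝ} (hr : r < 1) (hb : ∀ n, ‖φ^[n] 0‖ ≤ r) : ∃ p ∈ 𝔻, φ p = p := by
  by_contra! hfix
  have h₀ : (0 : ℂ) ∈ 𝔻 := mem_ball_self one_pos
  have hr₁ : 0 < 1 - r ^ 2 := by nlinarith [(norm_nonneg _).trans (hb 0)]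
  obtain ⟨C, hC₀, hC⟩ : ∃ C > 0, ∀ n, coshHalfDist 0 (φ^[n] 0) ≤ C := by
    refine ⟨1 / √(1 - r ^ 2), by positivity, fun n => ?_⟩
    rw [coshHalfDist_zero_left]
    gcongr
    exact hb n
  obtain ⟨R, hR, hKR⟩ := exists_lt_one_norm_le_of_coshHalfDist_le hr hC₀
  have hsub : closedBall (0 : ℂ) R ⊆ 𝔻 := closedBall_subset_ball hR
  obtain ⟨c, hc, hcK⟩ := exists_one_lt_forall_le_coshHalfDist_map (isCompact_closedBall 0 R) hsub
    (hd.continuousOn.mono hsub) (hm.mono_left hsub) fun w hw => hfix w (hsub hw)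
  have hκ : 2 / √(2 + 2 * c) < 1 :=
    (div_lt_one (by positivity)).2 (Real.lt_sqrt_of_sq_lt (by linarith))
  have hlim : Tendsto (fun j : ℕ => (2 / √(2 + 2 * c)) ^ j * C) atTop (𝓝 0) := by
    simpa only [zero_mul] using
      (tendsto_pow_atTop_nhds_zero_of_lt_one (by positivity) hκ).mul_const C
  obtain ⟨j, hj⟩ := (hlim.eventually_lt_const one_pos).exists
  obtain ⟨w, hw, hwC⟩ := exists_eventually_coshHalfDist_iterate_le_pow_mul hd hm h₀ hc hcK
    (fun w hw ⟨n, hn⟩ => mem_closedBall_zero_iff.2 (hKR w hw _ (hb n) hn))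
    ⟨0, h₀, Eventually.of_forall hC⟩ j
  obtain ⟨n, hn⟩ := hwC.exists
  linarith [one_le_coshHalfDist hw (hm.iterate n h₀)]

end FixedPoint

/-! ### Cesàro means -/

section BirkhoffSum

variable {α E : Type*} [SeminormedAddCommGroup E] {T : α → α} {g : α → E} {x : α} {B : ℝ}

lemma norm_birkhoffSum_le (h : ∀ m, ‖g (T^[m] x)‖ ≤ B) (n : ℕ) :
    ‖birkhoffSum T g n x‖ ≤ n * B := by
  simpa [birkhoffSum] using norm_sum_le_of_le (Finset.range n) fun m _ => h m

lemma norm_birkhoffSum_le_of_forall_ge {N : ℕ} {ε : ℝ} (hε : 0 ≤ ε)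
    (h : ∀ m, ‖g (T^[m] x)‖ ≤ B) (hN : ∀ m ≥ N, ‖g (T^[m] x)‖ ≤ ε) (n : ℕ) :
    ‖birkhoffSum T g n x‖ ≤ N * B + n * ε := by
  have hB : 0 ≤ B := (norm_nonneg _).trans (h 0)
  rcases le_total n N with hn | hn
  · calc ‖birkhoffSum T g n x‖ ≤ n * B := norm_birkhoffSum_le h n
      _ ≤ N * B + n * ε := by grw [hn]; exact le_add_of_nonneg_right (by positivity)
  · obtain ⟨j, rfl⟩ := Nat.exists_eq_add_of_le hn
    have htail : ‖birkhoffSum T g j (T^[N] x)‖ ≤ j * ε := by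
      refine norm_birkhoffSum_le (fun m => ?_) j
      rw [← Function.iterate_add_apply]
      exact hN _ (Nat.le_add_left N m)
    rw [birkhoffSum_add]
    grw [norm_add_le, norm_birkhoffSum_le h N, htail]
    gcongr
    exact Nat.le_add_left j N

lemma norm_birkhoffSum_le_of_isPeriodicPt {k : ℕ} (hk : 0 < k) (hx : Function.IsPeriodicPt T k x)
    (hsum : birkhoffSum T g k x = 0) (h : ∀ m, ‖g (T^[m] x)‖ ≤ B) (n : ℕ) :
    ‖birkhoffSum T g n x‖ ≤ k * B := by
  have hB : 0 ≤ B := (norm_nonneg _).trans (h 0)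
  induction n using Nat.strong_induction_on with
  | _ n ih =>
    rcases lt_or_ge n k with hn | hn
    · grw [norm_birkhoffSum_le h n, hn]
    · obtain ⟨j, rfl⟩ := Nat.exists_eq_add_of_le hn
      rw [birkhoffSum_add, hsum, zero_add, hx.eq]
      exact ih j (Nat.lt_add_of_pos_left hk)

end BirkhoffSum

section Cesaro

variable {φ f : ℂ → ℂ}

lemma cesaro_eq_birkhoffAverage (φ f : ℂ → ℂ) (n : ℕ) (z : ℂ) :
    cesaro φ f n z = birkhoffAverage ℂ φ (f ∘ φ) n z := by
  simp only [cesaro, birkhoffAverage, birkhoffSum, smul_eq_mul, Function.comp_apply,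
    ← Function.iterate_succ_apply' φ, ← Finset.Ico_succ_right_eq_Icc]
  rw [Finset.sum_Ico_eq_sum_range]
  simp only [Order.succ_eq_add_one, add_tsub_cancel_right, add_comm 1]

lemma cesaro_sub_const {n : ℕ} (hn : n ≠ 0) (z c : ℂ) :
    cesaro φ f n z - c = (n : ℂ)⁻¹ * birkhoffSum φ (fun w => f (φ w) - c) n z := by
  have hn' : (n : ℂ) ≠ 0 := Nat.cast_ne_zero.2 hn
  simp only [cesaro_eq_birkhoffAverage, birkhoffAverage, birkhoffSum, smul_eq_mul,
    Finset.sum_sub_distrib, Finset.sum_const, Finset.card_range, nsmul_eq_mul, Function.comp_apply]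
  field_simp

lemma cesaro_const_mul (c : ℂ) (n : ℕ) (z : ℂ) :
    cesaro φ (fun w => c * f w) n z = c * cesaro φ f n z := by
  simp only [cesaro, ← Finset.mul_sum]
  ring

lemma norm_cesaro_le {M : ℝ} {n : ℕ} {z : ℂ} (hM : ∀ m, ‖f (φ^[m] z)‖ ≤ M) :
    ‖cesaro φ f n z‖ ≤ M := by
  have hM₀ : 0 ≤ M := (norm_nonneg _).trans (hM 0)
  calc ‖cesaro φ f n z‖ ≤ (n : ℝ)⁻¹ * ∑ _m ∈ Finset.Icc 1 n, M := by
        rw [cesaro, norm_mul, norm_inv, norm_natCast]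
        gcongr
        exact norm_sum_le_of_le _ fun m _ => hM m
    _ = n / n * M := by simp; ring
    _ ≤ M := mul_le_of_le_one_left hM₀ (div_self_le_one _)

lemma meanErgodicHInf_of_unifMeanErgodicHInf (h : UnifMeanErgodicHInf φ) : MeanErgodicHInf φ := by
  obtain ⟨P, hP⟩ := h
  rintro f ⟨hf, M, hM⟩
  obtain ⟨K, hK, hMK⟩ : ∃ K : ℝ, 0 < K ∧ M ≤ K := ⟨max M 1, by positivity, le_max_left _ _⟩
  have hKc : (K : ℂ) ≠ 0 := ofReal_ne_zero.2 hK.ne'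
  let u : ℂ → ℂ := fun z => (K : ℂ)⁻¹ * f z
  have hu : ∀ z ∈ 𝔻, ‖u z‖ ≤ 1 := fun z hz => by
    rw [norm_mul, norm_inv, norm_real, Real.norm_of_nonneg hK.le, inv_mul_le_one₀ hK]
    exact (hM z hz).trans hMK
  refine ⟨fun z => K * P u z, Metric.tendstoUniformlyOn_iff.2 fun ε hε => ?_⟩
  obtain ⟨N, hN⟩ := hP (ε / (2 * K)) (by positivity)
  filter_upwards [eventually_ge_atTop N] with n hn z hz
  have hf_eq : cesaro φ f n z = K * cesaro φ u n z := by
    rw [cesaro_const_mul, mul_inv_cancel_left₀ hKc]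
  rw [dist_comm, dist_eq_norm, hf_eq, ← mul_sub, norm_mul, norm_real, Real.norm_of_nonneg hK.le]
  calc K * ‖cesaro φ u n z - P u z‖ ≤ K * (ε / (2 * K)) := by
        gcongr
        exact hN n hn u ⟨hf.const_mul _, 1, hu⟩ hu z hz
    _ = ε / 2 := by field_simp
    _ < ε := half_lt_self hε

lemma unifMeanErgodicHInf_of_norm_birkhoffSum_le {P : (ℂ → ℂ) → ℂ → ℂ}
    (h : ∀ ε > (0 : ℝ), ∃ C : ℝ, ∀ f, IsHInf f → (∀ z ∈ 𝔻, ‖f z‖ ≤ 1) → ∀ z ∈ 𝔻, ∀ n : ℕ,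
      ‖birkhoffSum φ (fun w => f (φ w) - P f z) n z‖ ≤ C + n * ε) :
    UnifMeanErgodicHInf φ := by
  refine ⟨P, fun ε hε => ?_⟩
  obtain ⟨C, hC⟩ := h (ε / 2) (half_pos hε)
  obtain ⟨N, hN⟩ := exists_nat_gt (2 * C / ε)
  refine ⟨N + 1, fun n hn f hf hf₁ z hz => ?_⟩
  have hn₀ : n ≠ 0 := by omega
  have hn_pos : (0 : ℝ) < n := by positivity
  have hCn : 2 * C ≤ n * ε := by
    rw [← div_le_iff₀ hε]
    exact hN.le.trans (Nat.cast_le.2 (by omega))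
  rw [cesaro_sub_const hn₀, norm_mul, norm_inv, norm_natCast, inv_mul_le_iff₀ hn_pos]
  linarith [hC f hf hf₁ z hz n]

lemma dist_le_of_norm_le_one {z₀ w : ℂ} (hz₀ : z₀ ∈ 𝔻) (hf : DifferentiableOn ℂ f 𝔻)
    (hf₁ : ∀ z ∈ 𝔻, ‖f z‖ ≤ 1) (hw : dist w z₀ < 1 - ‖z₀‖) :
    dist (f w) (f z₀) ≤ 2 / (1 - ‖z₀‖) * dist w z₀ := by
  have hsub : ball z₀ (1 - ‖z₀‖) ⊆ 𝔻 := ball_subset_ball' (by rw [dist_zero_right]; linarith)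
  refine dist_le_div_mul_dist_of_mapsTo_ball (hf.mono hsub) (fun v hv => ?_) hw
  rw [mem_closedBall, dist_eq_norm]
  linarith [norm_sub_le (f v) (f z₀), hf₁ v (hsub hv), hf₁ z₀ hz₀]

theorem unifMeanErgodicHInf_of_tendstoUniformlyOn_const (hm : MapsTo φ 𝔻 𝔻) {z₀ : ℂ} (hz₀ : z₀ ∈ 𝔻)
    (h : TendstoUniformlyOn (fun n => φ^[n]) (fun _ => z₀) atTop 𝔻) : UnifMeanErgodicHInf φ := by
  refine unifMeanErgodicHInf_of_norm_birkhoffSum_le (P := fun f _ => f z₀) fun ε hε => ?_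
  have hr : 0 < 1 - ‖z₀‖ := sub_pos.2 (mem_ball_zero_iff.1 hz₀)
  obtain ⟨N, hN⟩ := eventually_atTop.1
    (Metric.tendstoUniformlyOn_iff.1 h (min (1 - ‖z₀‖) (ε * (1 - ‖z₀‖) / 2)) (by positivity))
  refine ⟨N * 2, fun f hf hf₁ z hz n => norm_birkhoffSum_le_of_forall_ge hε.le
    (fun m => ?_) (fun m hm' => ?_) n⟩
  · linarith [norm_sub_le (f (φ (φ^[m] z))) (f z₀), hf₁ _ (hm (hm.iterate m hz)), hf₁ z₀ hz₀]
  · have hnear := hN (m + 1) (by omega) z hz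
    rw [dist_comm, lt_min_iff, Function.iterate_succ_apply'] at hnear
    rw [← dist_eq_norm]
    calc dist (f (φ (φ^[m] z))) (f z₀) ≤ 2 / (1 - ‖z₀‖) * dist (φ (φ^[m] z)) z₀ :=
          dist_le_of_norm_le_one hz₀ hf.1 hf₁ hnear.1
      _ ≤ 2 / (1 - ‖z₀‖) * (ε * (1 - ‖z₀‖) / 2) := by grw [hnear.2]
      _ = ε := by field_simp

theorem unifMeanErgodicHInf_of_isPeriodicPt (hm : MapsTo φ 𝔻 𝔻) {k : ℕ} (hk : 0 < k)
    (hper : ∀ z ∈ 𝔻, Function.IsPeriodicPt φ k z) : UnifMeanErgodicHInf φ := by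
  refine unifMeanErgodicHInf_of_norm_birkhoffSum_le (P := fun f => cesaro φ f k) fun ε hε =>
    ⟨k * 2, fun f _ hf₁ z hz n => ?_⟩
  have hsum : birkhoffSum φ (fun w => f (φ w) - cesaro φ f k z) k z = 0 := by
    have hmul := cesaro_sub_const (φ := φ) (f := f) hk.ne' z (cesaro φ f k z)
    rw [sub_self] at hmul
    exact (mul_eq_zero.1 hmul.symm).resolve_left (by simp [hk.ne'])
  have hle : ∀ m, ‖f (φ (φ^[m] z)) - cesaro φ f k z‖ ≤ 2 := fun m => by
    linarith [norm_sub_le (f (φ (φ^[m] z))) (cesaro φ f k z), hf₁ _ (hm (hm.iterate m hz)),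
      norm_cesaro_le (n := k) fun m => hf₁ _ (hm.iterate m hz)]
  grw [norm_birkhoffSum_le_of_isPeriodicPt hk (hper z hz) hsum hle n]
  exact le_add_of_nonneg_right (by positivity)

end Cesaro

/-! ### Blaschke products -/

/-- The Blaschke factor with zero `a`, scaled by `conj a` in place of the usual unimodular constant
`conj a / ‖a‖`; this keeps it bounded by `1` and makes its value at `0` equal to `‖a‖ ^ 2`. -/
def blaschkeFactor (a w : ℂ) : ℂ := conj a * discInvolution a w

/-- The Blaschke product with zeros `a i`, with the normalisation of `blaschkeFactor`. -/
def blaschkeProduct {ι : Type*} (a : ι → ℂ) (w : ℂ) : ℂ := ∏' i, blaschkeFactor (a i) w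

section BlaschkeFactor

variable {a w : ℂ}

@[simp] lemma blaschkeFactor_self (a : ℂ) : blaschkeFactor a a = 0 := by simp [blaschkeFactor]

@[simp] lemma blaschkeFactor_zero (a : ℂ) : blaschkeFactor a 0 = conj a * a := by
  simp [blaschkeFactor]

lemma norm_blaschkeFactor_le_one (ha : a ∈ 𝔻) (hw : w ∈ 𝔻) : ‖blaschkeFactor a w‖ ≤ 1 := by
  rw [blaschkeFactor, norm_mul, norm_conj]
  exact mul_le_one₀ (mem_ball_zero_iff.1 ha).le (norm_nonneg _)
    (mem_ball_zero_iff.1 (mapsTo_discInvolution ha hw)).le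

lemma differentiableOn_blaschkeFactor (ha : a ∈ 𝔻) : DifferentiableOn ℂ (blaschkeFactor a) 𝔻 :=
  (differentiableOn_discInvolution ha).const_mul _

lemma norm_blaschkeFactor_sub_one_le (ha : a ∈ 𝔻) (hw : w ∈ 𝔻) :
    ‖blaschkeFactor a w - 1‖ ≤ 2 / (1 - ‖w‖) * (1 - ‖a‖) := by
  have ha' := mem_ball_zero_iff.1 ha
  have hw' : 0 < 1 - ‖w‖ := sub_pos.2 (mem_ball_zero_iff.1 hw)
  have hden := one_sub_conj_mul_ne_zero ha'.le hw
  have hsub : blaschkeFactor a w - 1 = -((1 - conj a * a) / (1 - conj a * w)) := by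
    rw [blaschkeFactor, discInvolution]
    field_simp
    ring
  rw [hsub, norm_neg, norm_div, norm_one_sub_conj_mul_self ha, div_mul_eq_mul_div]
  gcongr
  · nlinarith [norm_nonneg a]
  · exact one_sub_norm_le_norm_one_sub_conj_mul ha'.le w

end BlaschkeFactor

section BlaschkeProduct

variable {ι : Type*} {a : ι → ℂ}

lemma hasProdLocallyUniformlyOn_blaschkeFactor (ha : ∀ i, a i ∈ 𝔻)
    (hs : Summable fun i => 1 - ‖a i‖) :
    HasProdLocallyUniformlyOn (fun i => blaschkeFactor (a i)) (blaschkeProduct a) 𝔻 := by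
  refine hasProdLocallyUniformlyOn_of_forall_compact isOpen_ball fun K hK𝔻 hK => ?_
  obtain ⟨r, hr, hKr⟩ := exists_lt_subset_ball hK.isClosed hK𝔻
  have hprod := (hs.mul_left (2 / (1 - r))).hasProdUniformlyOn_one_add hK
    (f := fun i w => blaschkeFactor (a i) w - 1)
    (Eventually.of_forall fun i w hw => by
      have ha' := (sub_pos.2 (mem_ball_zero_iff.1 (ha i))).le
      have hr' := sub_pos.2 hr
      grw [norm_blaschkeFactor_sub_one_le (ha i) (hK𝔻 hw), mem_ball_zero_iff.1 (hKr hw)])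
    fun i => ((differentiableOn_blaschkeFactor (ha i)).continuousOn.mono hK𝔻).sub
      continuousOn_const
  simp only [add_sub_cancel] at hprod
  exact hprod

lemma differentiableOn_blaschkeProduct (ha : ∀ i, a i ∈ 𝔻) (hs : Summable fun i => 1 - ‖a i‖) :
    DifferentiableOn ℂ (blaschkeProduct a) 𝔻 :=
  (hasProdLocallyUniformlyOn_blaschkeFactor ha hs).differentiableOn
    (Eventually.of_forall fun _ => DifferentiableOn.fun_finsetProd fun i _ =>
      differentiableOn_blaschkeFactor (ha i)) isOpen_ball

lemma norm_blaschkeProduct_le_one (ha : ∀ i, a i ∈ 𝔻) (hs : Summable fun i => 1 - ‖a i‖) {w : ℂ}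
    (hw : w ∈ 𝔻) : ‖blaschkeProduct a w‖ ≤ 1 := by
  refine le_of_tendsto ((hasProdLocallyUniformlyOn_blaschkeFactor ha hs).hasProd hw).norm
    (Eventually.of_forall fun s => ?_)
  exact Finset.prod_le_one (fun _ _ => norm_nonneg _)
    fun i _ => norm_blaschkeFactor_le_one (ha i) hw

lemma isHInf_blaschkeProduct (ha : ∀ i, a i ∈ 𝔻) (hs : Summable fun i => 1 - ‖a i‖) :
    IsHInf (blaschkeProduct a) :=
  ⟨differentiableOn_blaschkeProduct ha hs, 1, fun _ => norm_blaschkeProduct_le_one ha hs⟩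

lemma blaschkeProduct_apply_eq_zero (a : ι → ℂ) (i : ι) : blaschkeProduct a (a i) = 0 :=
  tprod_of_exists_eq_zero ⟨i, blaschkeFactor_self (a i)⟩

lemma blaschkeProduct_zero_ne_zero (ha : ∀ i, a i ∈ 𝔻) (ha₀ : ∀ i, a i ≠ 0)
    (hs : Summable fun i => 1 - ‖a i‖) : blaschkeProduct a 0 ≠ 0 := by
  have hne : ∏' i, (1 + (blaschkeFactor (a i) 0 - 1)) ≠ 0 := by
    refine tprod_one_add_ne_zero_of_summable (fun i => ?_)
      ((hs.mul_left 2).of_nonneg_of_le (fun _ => norm_nonneg _) fun i => ?_)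
    · simp [ha₀ i]
    · simpa using norm_blaschkeFactor_sub_one_le (ha i) (mem_ball_self one_pos)
  simpa only [blaschkeProduct, add_sub_cancel] using hne

end BlaschkeProduct

/-! ### Interior fixed points -/

section FixedPointZero

variable {φ : ℂ → ℂ}

lemma norm_iterate_anti (hd : DifferentiableOn ℂ φ 𝔻) (hm : MapsTo φ 𝔻 𝔻) (h₀ : φ 0 = 0) {z : ℂ}
    (hz : z ∈ 𝔻) : Antitone fun n => ‖φ^[n] z‖ :=
  antitone_nat_of_succ_le fun n => by
    rw [Function.iterate_succ_apply']
    exact norm_le_norm_of_mapsTo_ball hd (hm.mono_right ball_subset_closedBall) h₀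
      (mem_ball_zero_iff.1 (hm.iterate n hz))

lemma summable_one_sub_norm_iterate {a : ℕ → ℂ} (hd : DifferentiableOn ℂ φ 𝔻) (hm : MapsTo φ 𝔻 𝔻)
    (h₀ : φ 0 = 0) (ha : ∀ n, a n ∈ 𝔻)
    (hlow : ∀ n : ℕ, 1 - (1 / 2) ^ n / (n + 1) < ‖φ^[n] (a n)‖) :
    Summable fun i : Σ n : ℕ, Fin n => 1 - ‖φ^[i.2 + 1] (a i.1)‖ := by
  have hle : ∀ n (m : Fin n), 1 - ‖φ^[m + 1] (a n)‖ ≤ (1 / 2) ^ n / (n + 1) := fun n m => by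
    linarith [hlow n, norm_iterate_anti hd hm h₀ (ha n) (Nat.succ_le_of_lt m.2)]
  have hnonneg : ∀ i : Σ n : ℕ, Fin n, 0 ≤ 1 - ‖φ^[i.2 + 1] (a i.1)‖ := fun i =>
    (sub_pos.2 (mem_ball_zero_iff.1 (hm.iterate _ (ha _)))).le
  refine (summable_sigma_of_nonneg hnonneg).2 ⟨fun n => (hasSum_fintype _).summable, ?_⟩
  refine summable_geometric_two.of_nonneg_of_le (fun n => tsum_nonneg fun m => hnonneg ⟨n, m⟩)
    fun n => ?_
  calc ∑' m : Fin n, (1 - ‖φ^[m + 1] (a n)‖) ≤ ∑ _m : Fin n, (1 / 2 : ℝ) ^ n / (n + 1) := by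
        rw [tsum_fintype]
        exact Finset.sum_le_sum fun m _ => hle n m
    _ = (1 / 2 : ℝ) ^ n * (n / (n + 1)) := by simp; ring
    _ ≤ (1 / 2 : ℝ) ^ n :=
        mul_le_of_le_one_right (by positivity) (div_le_one_of_le₀ (by linarith) (by positivity))

/-- By the Schwarz lemma, if `‖φ^[n] z‖` is close to `1` then so are all `‖φ^[m] z‖` with `m ≤ n`,
so orbit segments of every length can be packed into the zero set of one Blaschke product. -/
theorem exists_isHInf_forall_cesaro_eq_zero (hd : DifferentiableOn ℂ φ 𝔻) (hm : MapsTo φ 𝔻 𝔻)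
    (h₀ : φ 0 = 0) (hsup : ∀ n, ∀ r < (1 : ℝ), ∃ z ∈ 𝔻, r < ‖φ^[n] z‖) :
    ∃ F, IsHInf F ∧ F 0 ≠ 0 ∧ ∀ n, ∃ z ∈ 𝔻, cesaro φ F n z = 0 := by
  choose a ha hlow using fun n : ℕ =>
    hsup n (1 - (1 / 2) ^ n / (n + 1)) (sub_lt_self 1 (by positivity))
  let b : (Σ n : ℕ, Fin n) → ℂ := fun i => φ^[i.2 + 1] (a i.1)
  have hb : ∀ i, b i ∈ 𝔻 := fun i => hm.iterate _ (ha _)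
  have hb₀ : ∀ i, b i ≠ 0 := fun ⟨n, m⟩ => by
    have hle : (1 / 2 : ℝ) ^ n / (n + 1) ≤ 1 :=
      div_le_one_of_le₀ (by grw [pow_le_one₀ (by norm_num) (by norm_num)]; simp) (by positivity)
    exact norm_pos_iff.1 (by
      linarith [hlow n, norm_iterate_anti hd hm h₀ (ha n) (Nat.succ_le_of_lt m.2)])
  have hs : Summable fun i => 1 - ‖b i‖ := summable_one_sub_norm_iterate hd hm h₀ ha hlow
  refine ⟨blaschkeProduct b, isHInf_blaschkeProduct hb hs, blaschkeProduct_zero_ne_zero hb hb₀ hs,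
    fun n => ⟨a n, ha n, ?_⟩⟩
  have hzero : ∀ m ∈ Finset.Icc 1 n, blaschkeProduct b (φ^[m] (a n)) = 0 := fun m hmn => by
    obtain ⟨hm₁, hmn⟩ := Finset.mem_Icc.1 hmn
    have hb_eq : b ⟨n, m - 1, by omega⟩ = φ^[m] (a n) := by
      simp only [b, Nat.sub_add_cancel hm₁]
    rw [← hb_eq, blaschkeProduct_apply_eq_zero]
  rw [cesaro, Finset.sum_eq_zero hzero, mul_zero]

end FixedPointZero

section Limit

variable {φ f g : ℂ → ℂ}

lemma map_eq_of_tendsto_cesaro (hm : MapsTo φ 𝔻 𝔻) (hf : IsHInf f)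
    (hg : ∀ z ∈ 𝔻, Tendsto (fun n => cesaro φ f n z) atTop (𝓝 (g z))) {z : ℂ} (hz : z ∈ 𝔻) :
    g (φ z) = g z := by
  obtain ⟨-, M, hM⟩ := hf
  have hbdd : Bornology.IsBounded (range fun n => (f ∘ φ) (φ^[n] z)) :=
    isBounded_iff_forall_norm_le.2 ⟨M, forall_mem_range.2 fun n => hM _ (hm (hm.iterate n hz))⟩
  have hlim := tendsto_birkhoffAverage_apply_sub_birkhoffAverage ℂ hbdd
  simp only [← cesaro_eq_birkhoffAverage] at hlim
  exact sub_eq_zero.1 (tendsto_nhds_unique ((hg _ (hm hz)).sub (hg z hz)) hlim)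

lemma tendsto_cesaro_of_isFixedPt {p : ℂ} (hp : Function.IsFixedPt φ p) :
    Tendsto (fun n => cesaro φ f n p) atTop (𝓝 (f p)) := by
  simpa only [← cesaro_eq_birkhoffAverage, Function.comp_apply, hp.eq] using
    hp.tendsto_birkhoffAverage ℂ (f ∘ φ)

lemma differentiableOn_cesaro (hd : DifferentiableOn ℂ φ 𝔻) (hm : MapsTo φ 𝔻 𝔻)
    (hf : DifferentiableOn ℂ f 𝔻) (n : ℕ) : DifferentiableOn ℂ (cesaro φ f n) 𝔻 :=
  (DifferentiableOn.fun_sum fun m _ => hf.comp (hd.iterate hm m) (hm.iterate m)).const_mul _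

end Limit

lemma eventually_eq_of_comp_eventuallyEq {𝕜 E : Type*} [NontriviallyNormedField 𝕜]
    [NormedAddCommGroup E] [NormedSpace 𝕜 E] {φ : 𝕜 → 𝕜} {g : 𝕜 → E} {p : 𝕜}
    (hφ : DifferentiableAt 𝕜 φ p) (hp : φ p = p) (hg : AnalyticAt 𝕜 g p) (hinv : g ∘ φ =ᶠ[𝓝 p] g)
    (hne : ∀ k > 0, deriv φ p ^ k ≠ 1) : ∀ᶠ z in 𝓝 p, g z = g p := by
  by_contra hconst
  have hga : AnalyticAt 𝕜 (fun z => g z - g p) p := hg.sub analyticAt_const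
  obtain ⟨k, h, hh, hhp, hev⟩ := hga.exists_eventuallyEq_pow_smul_nonzero_iff.2
    fun H => hconst (H.mono fun _ => sub_eq_zero.1)
  have hk : 0 < k := by
    refine Nat.pos_of_ne_zero fun hk => hhp ?_
    simpa [hk] using hev.self_of_nhds.symm
  have hφp : Tendsto φ (𝓝 p) (𝓝 p) := by simpa only [hp] using hφ.continuousAt.tendsto
  have heq : (fun z => slope φ p z ^ k • h (φ z)) =ᶠ[𝓝[≠] p] h := by
    filter_upwards [nhdsWithin_le_nhds hev, nhdsWithin_le_nhds (hφp.eventually hev),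
      nhdsWithin_le_nhds hinv, self_mem_nhdsWithin] with z hz hφz hgz hzp
    have hzp' : (z - p) ^ k ≠ 0 := pow_ne_zero k (sub_ne_zero.2 hzp)
    rw [← Function.comp_apply (f := g), hgz, hz] at hφz
    rw [slope_def_field, hp, div_pow, div_eq_inv_mul, mul_smul, ← hφz, inv_smul_smul₀ hzp']
  have hlim : deriv φ p ^ k • h p = h p :=
    tendsto_nhds_unique
      ((((hasDerivAt_iff_tendsto_slope.1 hφ.hasDerivAt).pow k).smul
        ((hh.continuousAt.tendsto.comp hφp).mono_left nhdsWithin_le_nhds)).congr' heq)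
      (hh.continuousAt.tendsto.mono_left nhdsWithin_le_nhds)
  exact hne k hk (smul_left_injective 𝕜 hhp (by simpa only [one_smul] using hlim))

section FixedPointZero

variable {φ : ℂ → ℂ}

lemma eqOn_const_of_map_eq {g : ℂ → ℂ} (hd : DifferentiableOn ℂ φ 𝔻) (h₀ : φ 0 = 0)
    (hg : DifferentiableOn ℂ g 𝔻) (hinv : ∀ z ∈ 𝔻, g (φ z) = g z)
    (hne : ∀ k > 0, deriv φ 0 ^ k ≠ 1) : EqOn g (fun _ => g 0) 𝔻 := by
  have h𝔻 : 𝔻 ∈ 𝓝 (0 : ℂ) := ball_mem_nhds 0 one_pos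
  have hga := hg.analyticOnNhd isOpen_ball
  exact hga.eqOn_of_preconnected_of_eventuallyEq analyticOnNhd_const
    (convex_ball (0 : ℂ) 1).isPreconnected (mem_ball_self one_pos)
    (eventually_eq_of_comp_eventuallyEq (hd.differentiableAt h𝔻) h₀ (hga 0 (mem_ball_self one_pos))
      (mem_of_superset h𝔻 hinv) hne)

lemma norm_iterate_le_pow {r : ℝ} (hd : DifferentiableOn ℂ φ 𝔻) (hm : MapsTo φ 𝔻 𝔻) (h₀ : φ 0 = 0)
    (hr : ∀ z ∈ 𝔻, ‖φ z‖ ≤ r) (k : ℕ) : ∀ z ∈ 𝔻, ‖φ^[k] z‖ ≤ r ^ k := by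
  have hr₀ : 0 ≤ r := (norm_nonneg _).trans (hr 0 (mem_ball_self one_pos))
  have hstep : ∀ z ∈ 𝔻, ‖φ z‖ ≤ r * ‖z‖ := fun z hz => by
    have hmaps : MapsTo φ 𝔻 (closedBall (φ 0) r) := fun w hw => by
      rw [h₀]
      exact mem_closedBall_zero_iff.2 (hr w hw)
    simpa [h₀] using dist_le_div_mul_dist_of_mapsTo_ball hd hmaps hz
  induction k with
  | zero => simpa using fun z hz => le_of_lt hz
  | succ k ih =>
    intro z hz
    rw [Function.iterate_succ_apply', pow_succ']
    exact (hstep _ (hm.iterate k hz)).trans (by grw [ih z hz])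

lemma tendstoUniformlyOn_iterate_of_norm_iterate_le {n : ℕ} {r : ℝ} (hd : DifferentiableOn ℂ φ 𝔻)
    (hm : MapsTo φ 𝔻 𝔻) (h₀ : φ 0 = 0) (hr : r < 1) (hn : ∀ z ∈ 𝔻, ‖φ^[n] z‖ ≤ r) :
    TendstoUniformlyOn (fun n => φ^[n]) (fun _ => 0) atTop 𝔻 := by
  refine Metric.tendstoUniformlyOn_iff.2 fun ε hε => ?_
  obtain ⟨k, hk⟩ := exists_pow_lt_of_lt_one hε hr
  filter_upwards [eventually_ge_atTop (n * k)] with N hN z hz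
  calc dist 0 (φ^[N] z) ≤ ‖φ^[n * k] z‖ := by
        rw [dist_zero_left]
        exact norm_iterate_anti hd hm h₀ hz hN
    _ ≤ r ^ k := by
        rw [Function.iterate_mul]
        exact norm_iterate_le_pow (hd.iterate hm n) (hm.iterate n) (Function.iterate_fixed h₀ n)
          hn k z hz
    _ < ε := hk

lemma eqOn_id_of_deriv_eq_one (hd : DifferentiableOn ℂ φ 𝔻) (hm : MapsTo φ 𝔻 𝔻) (h₀ : φ 0 = 0)
    (h₁ : deriv φ 0 = 1) : EqOn φ id 𝔻 := fun z hz => by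
  have haff := affine_of_mapsTo_ball_of_norm_dslope_eq_div (c := 0) (R₁ := 1) (R₂ := 1) hd
    (by rw [h₀]; exact hm.mono_right ball_subset_closedBall) (mem_ball_self one_pos)
    (by simp [dslope_same, h₁])
  simpa [h₀, dslope_same, h₁] using haff hz

theorem exists_deriv_pow_eq_one_of_meanErgodicHInf (hd : DifferentiableOn ℂ φ 𝔻)
    (hm : MapsTo φ 𝔻 𝔻) (h₀ : φ 0 = 0) (hsup : ∀ n, ∀ r < (1 : ℝ), ∃ z ∈ 𝔻, r < ‖φ^[n] z‖)
    (hme : MeanErgodicHInf φ) : ∃ k > 0, deriv φ 0 ^ k = 1 := by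
  by_contra! hne
  obtain ⟨F, hF, hF₀, hzero⟩ := exists_isHInf_forall_cesaro_eq_zero hd hm h₀ hsup
  obtain ⟨g, hg⟩ := hme F hF
  have hgd : DifferentiableOn ℂ g 𝔻 :=
    hg.tendstoLocallyUniformlyOn.differentiableOn
      (Eventually.of_forall fun n => differentiableOn_cesaro hd hm hF.1 n) isOpen_ball
  have hg_const := eqOn_const_of_map_eq hd h₀ hgd
    (fun z hz => map_eq_of_tendsto_cesaro hm hF (fun _ => hg.tendsto_at) hz) hne
  have hg₀ : g 0 = F 0 :=
    tendsto_nhds_unique (hg.tendsto_at (mem_ball_self one_pos)) (tendsto_cesaro_of_isFixedPt h₀)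
  obtain ⟨n, hn⟩ := (Metric.tendstoUniformlyOn_iff.1 hg ‖F 0‖ (norm_pos_iff.2 hF₀)).exists
  obtain ⟨z, hz, hFz⟩ := hzero n
  simpa [hFz, hg_const hz, hg₀] using hn z hz

theorem tendstoUniformlyOn_or_exists_iterate_eqOn_id (hd : DifferentiableOn ℂ φ 𝔻)
    (hm : MapsTo φ 𝔻 𝔻) (h₀ : φ 0 = 0) (hme : MeanErgodicHInf φ) :
    TendstoUniformlyOn (fun n => φ^[n]) (fun _ => 0) atTop 𝔻 ∨ ∃ k > 0, EqOn φ^[k] id 𝔻 := by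
  by_cases! hsup : ∀ n, ∀ r < (1 : ℝ), ∃ z ∈ 𝔻, r < ‖φ^[n] z‖
  · obtain ⟨k, hk, hφk⟩ := exists_deriv_pow_eq_one_of_meanErgodicHInf hd hm h₀ hsup hme
    have hφ := (hd.differentiableAt (ball_mem_nhds 0 one_pos)).hasDerivAt
    exact .inr ⟨k, hk, eqOn_id_of_deriv_eq_one (hd.iterate hm k) (hm.iterate k)
      (Function.iterate_fixed h₀ k) ((HasDerivAt.iterate 0 hφ h₀ k).deriv.trans hφk)⟩
  · obtain ⟨n, r, hr, hn⟩ := hsup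
    exact .inl (tendstoUniformlyOn_iterate_of_norm_iterate_le hd hm h₀ hr hn)

end FixedPointZero

section Conjugation

variable {φ : ℂ → ℂ} {p : ℂ}

/-- The conjugate of `φ` by the involution exchanging `p` and `0`; it moves a fixed point `p` of `φ`
to `0`. -/
def discConj (p : ℂ) (φ : ℂ → ℂ) : ℂ → ℂ := discInvolution p ∘ φ ∘ discInvolution p

lemma iterate_discConj (hm : MapsTo φ 𝔻 𝔻) (hp : p ∈ 𝔻) (n : ℕ) {z : ℂ} (hz : z ∈ 𝔻) :
    (discConj p φ)^[n] z = discInvolution p (φ^[n] (discInvolution p z)) := by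
  have hσz := mapsTo_discInvolution hp hz
  induction n with
  | zero => exact (discInvolution_discInvolution hp hz).symm
  | succ n ih =>
    rw [Function.iterate_succ_apply', ih, Function.iterate_succ_apply']
    simp only [discConj, Function.comp_apply,
      discInvolution_discInvolution hp (hm.iterate n hσz)]

lemma iterate_eq_discInvolution_iterate_discConj (hm : MapsTo φ 𝔻 𝔻) (hp : p ∈ 𝔻) (n : ℕ) {z : ℂ}
    (hz : z ∈ 𝔻) : φ^[n] z = discInvolution p ((discConj p φ)^[n] (discInvolution p z)) := by
  rw [iterate_discConj hm hp n (mapsTo_discInvolution hp hz), discInvolution_discInvolution hp hz,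
    discInvolution_discInvolution hp (hm.iterate n hz)]

lemma meanErgodicHInf_discConj (hm : MapsTo φ 𝔻 𝔻) (hp : p ∈ 𝔻) (h : MeanErgodicHInf φ) :
    MeanErgodicHInf (discConj p φ) := by
  have hσ := mapsTo_discInvolution hp
  rintro f ⟨hf, M, hM⟩
  obtain ⟨g, hg⟩ := h (f ∘ discInvolution p)
    ⟨hf.comp (differentiableOn_discInvolution hp) hσ, M, fun z hz => hM _ (hσ hz)⟩
  refine ⟨g ∘ discInvolution p, ((hg.comp _).mono hσ).congr (Eventually.of_forall fun n z hz => ?_)⟩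
  simp only [cesaro, Function.comp_apply, iterate_discConj hm hp _ hz]

lemma tendstoUniformlyOn_iterate_of_discConj (hm : MapsTo φ 𝔻 𝔻) (hp : p ∈ 𝔻)
    (h : TendstoUniformlyOn (fun n => (discConj p φ)^[n]) (fun _ => 0) atTop 𝔻) :
    TendstoUniformlyOn (fun n => φ^[n]) (fun _ => p) atTop 𝔻 := by
  have hcont : Tendsto (discInvolution p) (𝓝 0) (𝓝 p) := by
    simpa using ((differentiableOn_discInvolution hp).differentiableAt
      (ball_mem_nhds 0 one_pos)).continuousAt.tendsto
  have hσ : TendstoUniformlyOn (fun n => discInvolution p ∘ (discConj p φ)^[n]) (fun _ => p)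
      atTop 𝔻 :=
    tendsto_prod_principal_iff.1 (hcont.comp (tendsto_prod_principal_iff.2 h))
  exact ((hσ.comp (discInvolution p)).mono (mapsTo_discInvolution hp)).congr
    (Eventually.of_forall fun n z hz =>
      (iterate_eq_discInvolution_iterate_discConj hm hp n hz).symm)

end Conjugation

lemma isEllipticAutomorphism_of_iterate_eqOn_id {φ : ℂ → ℂ} {p : ℂ} {k : ℕ}
    (hd : DifferentiableOn ℂ φ 𝔻) (hm : MapsTo φ 𝔻 𝔻) (hp : p ∈ 𝔻) (hφp : φ p = p) (hk : 0 < k)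
    (hφk : EqOn φ^[k] id 𝔻) : IsEllipticAutomorphism φ := by
  obtain ⟨k, rfl⟩ := Nat.exists_eq_add_one.2 hk
  refine ⟨⟨hd, hm, φ^[k], hd.iterate hm k, hm.iterate k, fun z hz => ?_, fun z hz => ?_⟩,
    p, hp, hφp⟩
  · rw [← Function.iterate_succ_apply]
    exact hφk hz
  · rw [← Function.iterate_succ_apply' φ]
    exact hφk hz

theorem tendstoUniformlyOn_or_isEllipticAutomorphism_of_fixedPoint {φ : ℂ → ℂ} {p : ℂ}
    (hd : DifferentiableOn ℂ φ 𝔻) (hm : MapsTo φ 𝔻 𝔻) (hp : p ∈ 𝔻) (hφp : φ p = p)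
    (hme : MeanErgodicHInf φ) :
    TendstoUniformlyOn (fun n => φ^[n]) (fun _ => p) atTop 𝔻 ∨
      (IsEllipticAutomorphism φ ∧ ∃ k > 0, EqOn φ^[k] id 𝔻) := by
  have hσ := mapsTo_discInvolution hp
  have hσd := differentiableOn_discInvolution hp
  have hψd : DifferentiableOn ℂ (discConj p φ) 𝔻 := hσd.comp (hd.comp hσd hσ) (hm.comp hσ)
  have hψ₀ : discConj p φ 0 = 0 := by simp [discConj, hφp]
  refine (tendstoUniformlyOn_or_exists_iterate_eqOn_id hψd (hσ.comp (hm.comp hσ)) hψ₀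
    (meanErgodicHInf_discConj hm hp hme)).imp (tendstoUniformlyOn_iterate_of_discConj hm hp) ?_
  rintro ⟨k, hk, hψk⟩
  have hφk : EqOn φ^[k] id 𝔻 := fun z hz => by
    rw [iterate_eq_discInvolution_iterate_discConj hm hp k hz, hψk (hσ hz), id,
      discInvolution_discInvolution hp hz, id]
  exact ⟨isEllipticAutomorphism_of_iterate_eqOn_id hd hm hp hφp hk hφk, k, hk, hφk⟩

/-! ### Orbits accumulating at the boundary -/

section Oscillation

variable {ι : Type*} {l : Filter ι}

lemma norm_exp_I_mul_mul (t : ℝ) (w : ℂ) : ‖exp (I * t * w)‖ = Real.exp (-(t * w.im)) := by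
  rw [norm_exp, mul_assoc, I_mul_re, im_ofReal_mul]

lemma norm_exp_I_mul_mul_le {t b : ℝ} (ht : t ∈ Icc (0 : ℝ) 1) {w : ℂ} (hw : |w.im| ≤ b) :
    ‖exp (I * t * w)‖ ≤ Real.exp b := by
  rw [norm_exp_I_mul_mul, Real.exp_le_exp]
  calc -(t * w.im) ≤ |t * w.im| := neg_le_abs _
    _ = t * |w.im| := by rw [abs_mul, abs_of_nonneg ht.1]
    _ ≤ |w.im| := mul_le_of_le_one_left (abs_nonneg _) ht.2
    _ ≤ b := hw

lemma exp_neg_le_norm_exp_I_mul_mul {t b : ℝ} (ht : t ∈ Icc (0 : ℝ) 1) {w : ℂ} (hw : |w.im| ≤ b) :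
    Real.exp (-b) ≤ ‖exp (I * t * w)‖ := by
  have h : ‖exp (I * t * -w)‖ ≤ Real.exp b :=
    norm_exp_I_mul_mul_le ht (by rwa [neg_im, abs_neg])
  rw [mul_neg, exp_neg, norm_inv] at h
  rw [Real.exp_neg]
  exact inv_le_of_inv_le₀ (norm_pos_iff.2 (exp_ne_zero _)) h

lemma norm_integral_exp_I_mul_mul_le {b : ℝ} {w : ℂ} (hw₀ : w ≠ 0) (hw : |w.im| ≤ b) :
    ‖∫ t in (0 : ℝ)..1, exp (I * t * w)‖ ≤ (Real.exp b + 1) / ‖w‖ := by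
  have hint : ∫ t in (0 : ℝ)..1, exp (I * t * w) = (exp (I * (1 : ℝ) * w) - 1) / (I * w) := by
    simpa [mul_right_comm] using
      integral_exp_mul_complex (a := 0) (b := 1) (mul_ne_zero I_ne_zero hw₀)
  rw [hint, norm_div, norm_mul, norm_I, one_mul]
  gcongr
  exact (norm_sub_le _ _).trans
    (by rw [norm_one]; grw [norm_exp_I_mul_mul_le (right_mem_Icc.2 zero_le_one) hw])

lemma not_forall_tendsto_exp_I_mul_mul_one [l.NeBot] [l.IsCountablyGenerated] {w : ι → ℂ} {b : ℝ}
    (hw : Tendsto (fun i => ‖w i‖) l atTop) (him : ∀ i, |(w i).im| ≤ b) :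
    ¬ ∀ t ∈ Icc (0 : ℝ) 1, Tendsto (fun i => exp (I * t * w i)) l (𝓝 1) := by
  intro hone
  have hIcc : ∀ t ∈ uIoc (0 : ℝ) 1, t ∈ Icc (0 : ℝ) 1 := fun t ht =>
    Ioc_subset_Icc_self (uIoc_of_le (zero_le_one' ℝ) ▸ ht)
  have hlim_one : Tendsto (fun i => ∫ t in (0 : ℝ)..1, exp (I * t * w i)) l
      (𝓝 (∫ _ in (0 : ℝ)..1, (1 : ℂ))) :=
    intervalIntegral.tendsto_integral_filter_of_dominated_convergence (fun _ => Real.exp b)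
      (.of_forall fun i => Continuous.aestronglyMeasurable (by fun_prop))
      (.of_forall fun i => .of_forall fun t ht => norm_exp_I_mul_mul_le (hIcc t ht) (him i))
      intervalIntegrable_const
      (.of_forall fun t ht => hone t (hIcc t ht))
  have hlim_zero : Tendsto (fun i => ∫ t in (0 : ℝ)..1, exp (I * t * w i)) l (𝓝 0) :=
    squeeze_zero_norm' ((hw.eventually_gt_atTop 0).mono fun i hi =>
      norm_integral_exp_I_mul_mul_le (norm_pos_iff.1 hi) (him i)) (hw.const_div_atTop _)
  simpa using tendsto_nhds_unique hlim_one hlim_zero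

lemma not_forall_exists_tendsto_exp_I_mul_mul {w : ℕ → ℂ} {b : ℝ}
    (hre : Tendsto (fun k => (w k).re) atTop atTop) (him : ∀ k, |(w k).im| ≤ b) :
    ¬ ∀ t ∈ Icc (0 : ℝ) 1, ∃ c, Tendsto (fun k => exp (I * t * w k)) atTop (𝓝 c) := by
  intro hconv
  have hnext : ∀ k : ℕ, ∃ j ≥ k, (w k).re + k ≤ (w j).re := fun k =>
    ((eventually_ge_atTop k).and (hre.eventually_ge_atTop _)).exists
  choose j hkj hj using hnext
  have hgap : ∀ k : ℕ, (k : ℝ) ≤ (w (j k) - w k).re := fun k => by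
    rw [sub_re]
    linarith [hj k]
  have hnorm : Tendsto (fun k => ‖w (j k) - w k‖) atTop atTop :=
    tendsto_atTop_mono (fun k => (hgap k).trans (re_le_norm _)) tendsto_natCast_atTop_atTop
  have him_sub : ∀ k, |(w (j k) - w k).im| ≤ b + b := fun k =>
    (abs_sub _ _).trans (add_le_add (him _) (him _))
  refine not_forall_tendsto_exp_I_mul_mul_one hnorm him_sub fun t ht => ?_
  obtain ⟨c, hc⟩ := hconv t ht
  have hc₀ : c ≠ 0 := norm_pos_iff.1 ((Real.exp_pos (-b)).trans_le
    (ge_of_tendsto' hc.norm fun k => exp_neg_le_norm_exp_I_mul_mul ht (him k)))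
  have hquot := (hc.comp (tendsto_atTop_mono hkj tendsto_id)).div hc hc₀
  rw [div_self hc₀] at hquot
  simp only [mul_sub, exp_sub]
  exact hquot

lemma tendsto_exp_I_mul_mul_sub {v w : ι → ℂ} {t b : ℝ} (ht : t ∈ Icc (0 : ℝ) 1)
    (him : ∀ i, |(w i).im| ≤ b) (hvw : Tendsto (fun i => v i - w i) l (𝓝 0)) :
    Tendsto (fun i => exp (I * t * v i) - exp (I * t * w i)) l (𝓝 0) := by
  have hratio : Tendsto (fun i => exp (I * t * (v i - w i)) - 1) l (𝓝 0) := by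
    simpa using ((hvw.const_mul (I * t)).cexp).sub_const 1
  have hbdd : IsBoundedUnder (· ≤ ·) l (norm ∘ fun i => exp (I * t * w i)) :=
    isBoundedUnder_of ⟨_, fun i => norm_exp_I_mul_mul_le ht (him i)⟩
  refine (hratio.zero_mul_isBoundedUnder_le hbdd).congr fun i => ?_
  rw [sub_mul, ← exp_add, one_mul]
  ring_nf

lemma norm_log_sub_log_le {R : ℝ} (hR : 0 < R) {z w : ℂ} (hz : R ≤ z.re) (hw : R ≤ w.re) :
    ‖log z - log w‖ ≤ R⁻¹ * ‖z - w‖ :=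
  (convex_halfSpace_re_ge R).norm_image_sub_le_of_norm_hasDerivWithin_le
    (fun _ hx => (hasDerivAt_log (.inl (hR.trans_le hx))).hasDerivWithinAt)
    (fun x hx => by
      rw [norm_inv]
      exact inv_anti₀ hR (le_trans hx (re_le_norm x))) hw hz

lemma tendsto_log_sub_log {v w : ι → ℂ} {C : ℝ} (hw : Tendsto (fun i => (w i).re) l atTop)
    (hC : ∀ i, ‖v i - w i‖ ≤ C) : Tendsto (fun i => log (v i) - log (w i)) l (𝓝 0) := by
  have hR : Tendsto (fun i => (w i).re - C) l atTop := tendsto_atTop_add_const_right l (-C) hw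
  have hbound : ∀ᶠ i in l, ‖log (v i) - log (w i)‖ ≤ ((w i).re - C)⁻¹ * C := by
    filter_upwards [hR.eventually_gt_atTop 0] with i hi
    have hre : |(v i).re - (w i).re| ≤ C := (abs_re_le_norm _).trans (hC i)
    refine (norm_log_sub_log_le hi ?_ ?_).trans (by gcongr; exact hC i)
    · linarith [neg_le_of_abs_le hre]
    · linarith [(norm_nonneg _).trans (hC i)]
  exact squeeze_zero_norm' hbound (by simpa using hR.inv_tendsto_atTop.mul_const C)

end Oscillation

section BoundaryLog

variable {ω z w : ℂ}

/-- The function `1 + log (2 / (1 - ω̄ z))` on the disc, for `‖ω‖ ≤ 1`. Its real part is at least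
`1`, so that `log (boundaryLog ω z)` is holomorphic with imaginary part of modulus at most `π`, and
tends to `∞` as `z → ω` when `‖ω‖ = 1`. -/
def boundaryLog (ω z : ℂ) : ℂ := 1 + Real.log 2 - log (1 - conj ω * z)

lemma boundaryLog_re (ω z : ℂ) :
    (boundaryLog ω z).re = 1 + Real.log 2 - Real.log ‖1 - conj ω * z‖ := by
  simp only [boundaryLog, sub_re, add_re, one_re, ofReal_re, log_re]

lemma one_le_boundaryLog_re (hω : ‖ω‖ ≤ 1) (hz : z ∈ 𝔻) : 1 ≤ (boundaryLog ω z).re := by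
  have hprod : ‖conj ω * z‖ ≤ 1 := by
    rw [norm_mul, norm_conj]
    exact mul_le_one₀ hω (norm_nonneg z) (mem_ball_zero_iff.1 hz).le
  have hle : ‖1 - conj ω * z‖ ≤ 2 :=
    (norm_sub_le _ _).trans (by rw [norm_one]; linarith)
  rw [boundaryLog_re]
  linarith [Real.log_le_log (norm_one_sub_conj_mul_pos hω hz) hle]

lemma differentiableOn_boundaryLog (hω : ‖ω‖ ≤ 1) : DifferentiableOn ℂ (boundaryLog ω) 𝔻 := by
  refine (DifferentiableOn.clog (by fun_prop) fun z hz => .inl ?_).const_sub _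
  have hlt : ‖conj ω * z‖ < 1 := by
    rw [norm_mul, norm_conj]
    exact (mul_le_of_le_one_left (norm_nonneg z) hω).trans_lt (mem_ball_zero_iff.1 hz)
  rw [sub_re, one_re, sub_pos]
  exact (re_le_norm _).trans_lt hlt

lemma abs_log_im_le_pi (z : ℂ) : |(log z).im| ≤ Real.pi := by
  rw [log_im]
  exact abs_arg_le_pi z

lemma isHInf_exp_log_boundaryLog (hω : ‖ω‖ ≤ 1) {t : ℝ} (ht : t ∈ Icc (0 : ℝ) 1) :
    IsHInf fun z => exp (I * t * log (boundaryLog ω z)) :=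
  ⟨(((differentiableOn_boundaryLog hω).clog fun _ hz =>
      .inl (one_pos.trans_le (one_le_boundaryLog_re hω hz))).const_mul _).cexp,
    Real.exp Real.pi, fun _ _ => norm_exp_I_mul_mul_le ht (abs_log_im_le_pi _)⟩

lemma tendsto_boundaryLog_re {ι : Type*} {l : Filter ι} {y : ι → ℂ} (hω : ‖ω‖ = 1)
    (hy : ∀ i, y i ∈ 𝔻) (hlim : Tendsto y l (𝓝 ω)) :
    Tendsto (fun i => (boundaryLog ω (y i)).re) l atTop := by
  have hnorm : Tendsto (fun i => ‖1 - conj ω * y i‖) l (𝓝[≠] 0) := by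
    refine tendsto_nhdsWithin_iff.2
      ⟨?_, .of_forall fun i => (norm_one_sub_conj_mul_pos hω.le (hy i)).ne'⟩
    simpa [conj_mul', hω] using ((hlim.const_mul (conj ω)).const_sub 1).norm
  simp only [boundaryLog_re, sub_eq_add_neg]
  exact tendsto_atTop_add_const_left _ _
    (tendsto_neg_atBot_atTop.comp (Real.tendsto_log_nhdsNE_zero.comp hnorm))

lemma log_norm_one_sub_conj_mul_le {r : ℝ} (hω : ‖ω‖ ≤ 1) (hz : z ∈ 𝔻) (hw : w ∈ 𝔻) (hr : r < 1)
    (h : ‖discInvolution z w‖ ≤ r) :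
    Real.log ‖1 - conj ω * w‖ ≤ Real.log (1 + 2 / (1 - r)) + Real.log ‖1 - conj ω * z‖ := by
  have hr' : 0 < 1 - r := sub_pos.2 hr
  have hle : ‖1 - conj ω * w‖ ≤ (1 + 2 / (1 - r)) * ‖1 - conj ω * z‖ :=
    calc ‖1 - conj ω * w‖ = ‖1 - conj ω * z + conj ω * (z - w)‖ := by ring_nf
      _ ≤ ‖1 - conj ω * z‖ + ‖ω‖ * ‖z - w‖ := by
        grw [norm_add_le, norm_mul, norm_conj]
      _ ≤ ‖1 - conj ω * z‖ + 1 * (2 / (1 - r) * (1 - ‖z‖)) := by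
        grw [hω, norm_sub_le_of_norm_discInvolution_le hz hw hr h]
      _ ≤ ‖1 - conj ω * z‖ + 1 * (2 / (1 - r) * ‖1 - conj ω * z‖) := by
        grw [one_sub_norm_le_norm_one_sub_conj_mul hω z]
      _ = (1 + 2 / (1 - r)) * ‖1 - conj ω * z‖ := by ring
  rw [← Real.log_mul (by positivity) (norm_one_sub_conj_mul_pos hω hz).ne']
  exact Real.log_le_log (norm_one_sub_conj_mul_pos hω hw) hle

lemma norm_boundaryLog_sub_le {r : ℝ} (hω : ‖ω‖ ≤ 1) (hz : z ∈ 𝔻) (hw : w ∈ 𝔻) (hr : r < 1)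
    (hzw : ‖discInvolution z w‖ ≤ r) (hwz : ‖discInvolution w z‖ ≤ r) :
    ‖boundaryLog ω z - boundaryLog ω w‖ ≤ Real.log (1 + 2 / (1 - r)) + 2 * Real.pi := by
  refine (norm_le_abs_re_add_abs_im _).trans (add_le_add ?_ ?_)
  · rw [sub_re, boundaryLog_re, boundaryLog_re, abs_le]
    constructor <;>
      linarith [log_norm_one_sub_conj_mul_le hω hz hw hr hzw,
        log_norm_one_sub_conj_mul_le hω hw hz hr hwz]
  · have him : (boundaryLog ω z - boundaryLog ω w).im =
        (log (1 - conj ω * w)).im - (log (1 - conj ω * z)).im := by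
      simp [boundaryLog]
    rw [him, two_mul]
    exact (abs_sub _ _).trans (add_le_add (abs_log_im_le_pi _) (abs_log_im_le_pi _))

end BoundaryLog

section UnboundedOrbit

variable {φ : ℂ → ℂ}

lemma norm_boundaryLog_iterate_sub_le {ω : ℂ} (hd : DifferentiableOn ℂ φ 𝔻) (hm : MapsTo φ 𝔻 𝔻)
    (hω : ‖ω‖ ≤ 1) (m n : ℕ) :
    ‖boundaryLog ω (φ^[m] (φ^[n] 0)) - boundaryLog ω (φ^[n] 0)‖ ≤
      Real.log (1 + 2 / (1 - ‖φ^[m] 0‖)) + 2 * Real.pi := by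
  have h₀ : (0 : ℂ) ∈ 𝔻 := mem_ball_self one_pos
  have hφm : φ^[m] 0 ∈ 𝔻 := hm.iterate m h₀
  rw [(Function.Commute.refl φ).iterate_iterate m n |>.eq]
  refine norm_boundaryLog_sub_le hω (hm.iterate n hφm) (hm.iterate n h₀) (mem_ball_zero_iff.1 hφm)
    ?_ ?_
  · exact (schwarz_pick (hd.iterate hm n) (hm.iterate n) hφm h₀).trans_eq (by simp)
  · exact (schwarz_pick (hd.iterate hm n) (hm.iterate n) h₀ hφm).trans_eq (by simp [discInvolution])

lemma exists_tendsto_sphere {x : ℕ → ℂ} (hx : ∀ n, x n ∈ 𝔻)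
    (hsup : ∀ r < (1 : ℝ), ∃ n, r < ‖x n‖) :
    ∃ ω : ℂ, ‖ω‖ = 1 ∧ ∃ N : ℕ → ℕ, Tendsto (x ∘ N) atTop (𝓝 ω) := by
  choose! N hN using hsup
  obtain ⟨r, -, hr, hr_lim⟩ := exists_seq_strictMono_tendsto (1 : ℝ)
  have hnorm : Tendsto (fun k => ‖x (N (r k))‖) atTop (𝓝 1) :=
    tendsto_of_tendsto_of_tendsto_of_le_of_le hr_lim tendsto_const_nhds
      (fun k => (hN _ (hr k)).le) fun k => (mem_ball_zero_iff.1 (hx _)).le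
  obtain ⟨ω, -, σ, hσ, hω⟩ := (isCompact_closedBall (0 : ℂ) 1).tendsto_subseq
    fun k => ball_subset_closedBall (hx (N (r k)))
  exact ⟨ω, tendsto_nhds_unique hω.norm (hnorm.comp hσ.tendsto_atTop), N ∘ r ∘ σ, hω⟩

lemma tendsto_sub_of_tendstoUniformlyOn_cesaro {ι : Type*} {l : Filter ι} {s : Set ℂ} {f g : ℂ → ℂ}
    {y : ι → ℂ} (hg : TendstoUniformlyOn (cesaro φ f) g atTop s) (hy : ∀ i, y i ∈ s)
    (hslow : ∀ m, Tendsto (fun i => f (φ^[m] (y i)) - f (y i)) l (𝓝 0)) :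
    Tendsto (fun i => g (y i) - f (y i)) l (𝓝 0) := by
  have hunif : TendstoUniformly (fun n i => cesaro φ f n (y i) - f (y i))
      (fun i => g (y i) - f (y i)) atTop :=
    Metric.tendstoUniformly_iff.2 fun ε hε =>
      (Metric.tendstoUniformlyOn_iff.1 hg ε hε).mono fun n hn i => by
        simpa only [dist_sub_right] using hn (y i) (hy i)
  refine hunif.tendsto_of_eventually_tendsto (L := fun _ => 0) ?_ tendsto_const_nhds
  filter_upwards [eventually_ne_atTop 0] with n hn
  simp only [cesaro_sub_const hn, birkhoffSum, ← Function.iterate_succ_apply']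
  simpa using (tendsto_finsetSum (Finset.range n) fun m _ => hslow (m + 1)).const_mul (n : ℂ)⁻¹

theorem not_meanErgodicHInf_of_forall_exists_lt_norm_iterate (hd : DifferentiableOn ℂ φ 𝔻)
    (hm : MapsTo φ 𝔻 𝔻) (hsup : ∀ r < (1 : ℝ), ∃ n, r < ‖φ^[n] 0‖) : ¬ MeanErgodicHInf φ := by
  intro hme
  have hφ0 : ∀ n, φ^[n] 0 ∈ 𝔻 := fun n => hm.iterate n (mem_ball_self one_pos)
  obtain ⟨ω, hω, N, hN⟩ := exists_tendsto_sphere hφ0 hsup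
  have hU : Tendsto (fun k => (boundaryLog ω (φ^[N k] 0)).re) atTop atTop :=
    tendsto_boundaryLog_re hω (fun k => hφ0 (N k)) hN
  refine not_forall_exists_tendsto_exp_I_mul_mul (w := fun k => log (boundaryLog ω (φ^[N k] 0)))
    ?_ (fun k => abs_log_im_le_pi _) fun t ht => ?_
  · simp only [log_re]
    exact Real.tendsto_log_atTop.comp (tendsto_atTop_mono (fun k => re_le_norm _) hU)
  · set f : ℂ → ℂ := fun z => exp (I * t * log (boundaryLog ω z))
    have hf_mem : IsHInf f := isHInf_exp_log_boundaryLog hω.le ht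
    obtain ⟨g, hg⟩ := hme f hf_mem
    have hg_orbit : ∀ n, g (φ^[n] 0) = g 0 := fun n => by
      induction n with
      | zero => rfl
      | succ n ih =>
        rw [Function.iterate_succ_apply',
          map_eq_of_tendsto_cesaro hm hf_mem (fun z hz => hg.tendsto_at hz) (hφ0 n), ih]
    have hslow : ∀ m, Tendsto (fun k => f (φ^[m] (φ^[N k] 0)) - f (φ^[N k] 0)) atTop (𝓝 0) :=
      fun m => tendsto_exp_I_mul_mul_sub ht (fun k => abs_log_im_le_pi _)
        (tendsto_log_sub_log hU fun k => norm_boundaryLog_iterate_sub_le hd hm hω.le m (N k))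
    have hdiff := tendsto_sub_of_tendstoUniformlyOn_cesaro hg (fun k => hφ0 (N k)) hslow
    simp only [hg_orbit] at hdiff
    exact ⟨g 0, by simpa using hdiff.const_sub (g 0)⟩

end UnboundedOrbit

/-! ### The characterization -/

theorem tendstoUniformlyOn_or_isEllipticAutomorphism_of_meanErgodicHInf {φ : ℂ → ℂ}
    (hd : DifferentiableOn ℂ φ 𝔻) (hm : MapsTo φ 𝔻 𝔻) (hme : MeanErgodicHInf φ) :
    (∃ p ∈ 𝔻, TendstoUniformlyOn (fun n => φ^[n]) (fun _ => p) atTop 𝔻) ∨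
      (IsEllipticAutomorphism φ ∧ ∃ k > 0, EqOn φ^[k] id 𝔻) := by
  by_cases! hsup : ∀ r < (1 : ℝ), ∃ n, r < ‖φ^[n] 0‖
  · exact absurd hme (not_meanErgodicHInf_of_forall_exists_lt_norm_iterate hd hm hsup)
  · obtain ⟨r, hr, hb⟩ := hsup
    obtain ⟨p, hp, hφp⟩ := exists_fixedPoint_of_norm_iterate_le hd hm hr hb
    exact (tendstoUniformlyOn_or_isEllipticAutomorphism_of_fixedPoint hd hm hp hφp hme).imp_left
      fun h => ⟨p, hp, h⟩

theorem unifMeanErgodicHInf_of_tendstoUniformlyOn_or_isPeriodicPt {φ : ℂ → ℂ} (hm : MapsTo φ 𝔻 𝔻)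
    (h : (∃ p ∈ 𝔻, TendstoUniformlyOn (fun n => φ^[n]) (fun _ => p) atTop 𝔻) ∨
      ∃ k > 0, ∀ z ∈ 𝔻, Function.IsPeriodicPt φ k z) : UnifMeanErgodicHInf φ := by
  rcases h with ⟨p, hp, h⟩ | ⟨k, hk, hper⟩
  · exact unifMeanErgodicHInf_of_tendstoUniformlyOn_const hm hp h
  · exact unifMeanErgodicHInf_of_isPeriodicPt hm hk hper

/-- **Theorem A.** Let `φ` be a holomorphic self-map of `𝔻`. The following are equivalent:
(i) `C_φ : H^∞(𝔻) → H^∞(𝔻)` is mean ergodic; (ii) `C_φ` is uniformly mean ergodic on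
`H^∞(𝔻)`; (iii) either `(φ^n)` converges uniformly on `𝔻` to a constant `z₀ ∈ 𝔻`, or `φ`
is a periodic elliptic automorphism. -/
theorem stmt_15 (φ : ℂ → ℂ) (hφd : DifferentiableOn ℂ φ (ball (0:ℂ) 1))
    (hφm : MapsTo φ (ball (0:ℂ) 1) (ball (0:ℂ) 1)) :
    (MeanErgodicHInf φ ↔
      ((∃ z₀ ∈ ball (0:ℂ) 1,
          TendstoUniformlyOn (fun (n : ℕ) (z : ℂ) => φ^[n] z) (fun _ => z₀) atTop
            (ball (0:ℂ) 1)) ∨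
        (IsEllipticAutomorphism φ ∧ ∃ k : ℕ, 0 < k ∧ ∀ z ∈ ball (0:ℂ) 1, φ^[k] z = z))) ∧
    (UnifMeanErgodicHInf φ ↔
      ((∃ z₀ ∈ ball (0:ℂ) 1,
          TendstoUniformlyOn (fun (n : ℕ) (z : ℂ) => φ^[n] z) (fun _ => z₀) atTop
            (ball (0:ℂ) 1)) ∨
        (IsEllipticAutomorphism φ ∧ ∃ k : ℕ, 0 < k ∧ ∀ z ∈ ball (0:ℂ) 1, φ^[k] z = z))) := by
  have hmean := tendstoUniformlyOn_or_isEllipticAutomorphism_of_meanErgodicHInf hφd hφm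
  exact ⟨⟨hmean, fun h => meanErgodicHInf_of_unifMeanErgodicHInf
      (unifMeanErgodicHInf_of_tendstoUniformlyOn_or_isPeriodicPt hφm (h.imp_right And.right))⟩,
    fun h => hmean (meanErgodicHInf_of_unifMeanErgodicHInf h),
    fun h => unifMeanErgodicHInf_of_tendstoUniformlyOn_or_isPeriodicPt hφm
      (h.imp_right And.right)⟩
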